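/- arXiv:math/0111112 — 2 statements merged into one kernel-verified Lean document; each statement's English description precedes it below -/
import Mathlib

section
/- Let m' ≥ m and n' ≥ n be positive integers. There exists a (necessarily unique) k_q-algebra homomorphism r^q_{(m,n,m',n')} : k_q[Δ_{m,n}] → k_q[Δ_{m',n'}] such that r^q(D_{l_0...l_{m-1}}) = D_{-m',...,-m-1,l_0,...,l_{m-1}} for all -m ≤ l_0 < ... < l_{m-1} ≤ n-1. Moreover e^q_{(m',n',m,n)} ∘ r^q_{(m,n,m',n')} is the identity of k_q[Δ_{m,n}]; in particular r^q_{(m,n,m',n')} is injective. -/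
set_option maxHeartbeats 2000000
set_option synthInstance.maxHeartbeats 400000

noncomputable section

open TensorProduct

/-- `k_q = k[q, q⁻¹]`, the ring of Laurent polynomials over `k`. -/
abbrev kq (k : Type) [Field k] : Type := LaurentPolynomial k

/-- The parameter `q ∈ k_q`. -/
def qParam (k : Type) [Field k] : kq k := LaurentPolynomial.T 1

/-- The inverse parameter `q⁻¹ ∈ k_q`. -/
def qInv (k : Type) [Field k] : kq k := LaurentPolynomial.T (-1)

/-- Row indices of the generic `(m+n) × m` quantum matrix: integers `-m, ..., n-1`. -/
abbrev RowI (m n : ℕ) : Type := ↥(Finset.Icc (-(m : ℤ)) ((n : ℤ) - 1))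

/-- Column indices: integers `-m, ..., -1`. -/
abbrev ColI (m : ℕ) : Type := ↥(Finset.Icc (-(m : ℤ)) (-1 : ℤ))

/-- The defining relations of a quantum matrix algebra, with rows indexed by `R` and
columns indexed by `C`. -/
inductive QMRel (k : Type) [Field k] (R C : Type) [LinearOrder R] [LinearOrder C] :
    FreeAlgebra (kq k) (R × C) → FreeAlgebra (kq k) (R × C) → Prop
  | col (i i' : R) (j : C) (h : i < i') :
      QMRel k R C (FreeAlgebra.ι (kq k) (i, j) * FreeAlgebra.ι (kq k) (i', j))
        (qInv k • (FreeAlgebra.ι (kq k) (i', j) * FreeAlgebra.ι (kq k) (i, j)))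
  | row (i : R) (j j' : C) (h : j < j') :
      QMRel k R C (FreeAlgebra.ι (kq k) (i, j) * FreeAlgebra.ι (kq k) (i, j'))
        (qInv k • (FreeAlgebra.ι (kq k) (i, j') * FreeAlgebra.ι (kq k) (i, j)))
  | comm (i i' : R) (j j' : C) (h1 : i < i') (h2 : j' < j) :
      QMRel k R C (FreeAlgebra.ι (kq k) (i, j) * FreeAlgebra.ι (kq k) (i', j'))
        (FreeAlgebra.ι (kq k) (i', j') * FreeAlgebra.ι (kq k) (i, j))
  | qcomm (i i' : R) (j j' : C) (h1 : i < i') (h2 : j < j') :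
      QMRel k R C
        (FreeAlgebra.ι (kq k) (i, j) * FreeAlgebra.ι (kq k) (i', j') -
          FreeAlgebra.ι (kq k) (i', j') * FreeAlgebra.ι (kq k) (i, j))
        ((qInv k - qParam k) • (FreeAlgebra.ι (kq k) (i', j) * FreeAlgebra.ι (kq k) (i, j')))

/-- The quantum matrix algebra with rows indexed by `R` and columns indexed by `C`. -/
abbrev QMatG (k : Type) [Field k] (R C : Type) [LinearOrder R] [LinearOrder C] : Type :=
  RingQuot (QMRel k R C)

/-- The generator `a_{r,c}` of the quantum matrix algebra. -/
def qgen (k : Type) [Field k] (R C : Type) [LinearOrder R] [LinearOrder C] (r : R) (c : C) :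
    QMatG k R C :=
  RingQuot.mkAlgHom (kq k) (QMRel k R C) (FreeAlgebra.ι (kq k) (r, c))

/-- The rectangular quantum matrix algebra `k_q[a]_{m,n}`. -/
abbrev QMat (k : Type) [Field k] (m n : ℕ) : Type := QMatG k (RowI m n) (ColI m)

/-- The generator `a_{i,j}` of `k_q[a]_{m,n}`. -/
def av (k : Type) [Field k] (m n : ℕ) (i : RowI m n) (j : ColI m) : QMat k m n :=
  qgen k (RowI m n) (ColI m) i j

/-- The number of inversions of a map between finite linearly ordered sets. -/
def inversions {a b : ℕ} (f : Fin a → Fin b) : ℕ :=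
  ((Finset.univ : Finset (Fin a × Fin a)).filter fun p => p.1 < p.2 ∧ f p.2 < f p.1).card

/-- The coefficient `(-q)^{-ℓ}`. -/
def qCoeff (k : Type) [Field k] (l : ℕ) : kq k :=
  (-1 : kq k) ^ l * LaurentPolynomial.T (-(l : ℤ))

/-- The general quantum minor on rows `row 0 < row 1 < ⋯` and columns
`col 0 < col 1 < ⋯`:
`Σ_σ (-q)^{-ℓ(σ)} a_{row 0, col (σ 0)} ⋯ a_{row (s-1), col (σ (s-1))}`. -/
def qMinorG (k : Type) [Field k] (R C : Type) [LinearOrder R] [LinearOrder C]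
    (s : ℕ) (row : Fin s → R) (col : Fin s → C) : QMatG k R C :=
  ∑ σ : Equiv.Perm (Fin s),
    qCoeff k (inversions ⇑σ) •
      (List.ofFn fun t : Fin s => qgen k R C (row t) (col (σ t))).prod

/-- The quantum minor `D_{i_0 … i_{m-1}}` of `k_q[a]_{m,n}` on the rows in `I`. -/
def qMinor (k : Type) [Field k] (m n : ℕ) (I : Finset ℤ) (hI : I.card = m)
    (hsub : I ⊆ Finset.Icc (-(m : ℤ)) ((n : ℤ) - 1)) : QMat k m n :=
  qMinorG k (RowI m n) (ColI m) m
    (fun s => ⟨I.orderEmbOfFin hI s, hsub (Finset.orderEmbOfFin_mem I hI s)⟩)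
    (fun t => ⟨-(m : ℤ) + (t : ℕ), by
      have := t.2
      simp only [Finset.mem_Icc]
      omega⟩)

/-- The quantum grassmannian `k_q[Δ_{m,n}]`: the subalgebra of `k_q[a]_{m,n}` generated
by the quantum minors. -/
def QDeltaSub (k : Type) [Field k] (m n : ℕ) : Subalgebra (kq k) (QMat k m n) :=
  Algebra.adjoin (kq k) {x | ∃ I hI hsub, x = qMinor k m n I hI hsub}


/-- The defining property of `E^q_{(m',n',m,n)}` on the generators. -/
def EqProp (k : Type) [Field k] (m n m' n' : ℕ)
    (E : QMat k m' n' →ₐ[kq k] QMat k m n) : Prop :=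
  ∀ (i : RowI m' n') (j : ColI m'),
    E (av k m' n' i j) =
      if h : (i.1 ∈ Finset.Icc (-(m : ℤ)) ((n : ℤ) - 1)) ∧
          (j.1 ∈ Finset.Icc (-(m : ℤ)) (-1 : ℤ)) then
        av k m n ⟨i.1, h.1⟩ ⟨j.1, h.2⟩
      else if i.1 = j.1 then 1 else 0

/-- The defining property of `r^q_{(m,n,m',n')}` on the quantum minors:
`r^q(D_{l_0…l_{m-1}}) = D_{-m',…,-m-1,l_0,…,l_{m-1}}`. -/
def rqProp (k : Type) [Field k] (m n m' n' : ℕ)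
    (r : ↥(QDeltaSub k m n) →ₐ[kq k] ↥(QDeltaSub k m' n')) : Prop :=
  ∀ (I : Finset ℤ) (hI : I.card = m)
    (hsub : I ⊆ Finset.Icc (-(m : ℤ)) ((n : ℤ) - 1))
    (hmem : qMinor k m n I hI hsub ∈ QDeltaSub k m n)
    (hcard : (Finset.Icc (-(m' : ℤ)) (-(m : ℤ) - 1) ∪ I).card = m')
    (hsub' : Finset.Icc (-(m' : ℤ)) (-(m : ℤ) - 1) ∪ I ⊆
      Finset.Icc (-(m' : ℤ)) ((n' : ℤ) - 1)),
    (r ⟨qMinor k m n I hI hsub, hmem⟩ : QMat k m' n') =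
      qMinor k m' n' (Finset.Icc (-(m' : ℤ)) (-(m : ℤ) - 1) ∪ I) hcard hsub'

section Fock

variable {K A : Type*} [CommRing K] [Ring A] [Algebra K A]

/-- Number of elements of `S` below `j`. -/
def ecnt (S : Finset ℤ) (j : ℤ) : ℕ := (S.filter (· < j)).card

/-- Left multiplication by `∑ X_j ξ_j` on the quantum exterior algebra. -/
def Om (ν : K) (X : ℤ → A) (f : Finset ℤ → A) (S : Finset ℤ) : A :=
  ∑ j ∈ S, ν ^ ecnt S j • (X j * f (S.erase j))

/-- The vacuum vector. -/
def vac : Finset ℤ → A := fun S => if S = ∅ then 1 else 0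

/-- Iterated `Om`. -/
def OmL (ν : K) (X : ℤ → ℤ → A) : List ℤ → (Finset ℤ → A) → Finset ℤ → A
  | [], f => f
  | r :: rs, f => Om ν (X r) (OmL ν X rs f)

theorem Om_smul (ν : K) (X : ℤ → A) (c : K) (f : Finset ℤ → A) :
    Om ν X (c • f) = c • Om ν X f := by
  funext S
  simp only [Om, Pi.smul_apply, Finset.smul_sum]
  refine Finset.sum_congr rfl fun j _ => ?_
  rw [mul_smul_comm, smul_comm]

theorem Om_zero (ν : K) (X : ℤ → A) : Om ν X 0 = 0 := by
  funext S
  simp [Om]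

theorem ecnt_lt_erase {S : Finset ℤ} {j l : ℤ} (hj : j ∈ S) (h : j < l) :
    ecnt (S.erase j) l + 1 = ecnt S l := by
  unfold ecnt
  rw [Finset.filter_erase, Finset.card_erase_of_mem (by simp [hj, h])]
  have : 0 < (S.filter (· < l)).card := Finset.card_pos.2 ⟨j, by simp [hj, h]⟩
  omega

theorem ecnt_gt_erase {S : Finset ℤ} {j l : ℤ} (h : l ≤ j) :
    ecnt (S.erase j) l = ecnt S l := by
  unfold ecnt
  rw [Finset.filter_erase, Finset.erase_eq_of_notMem (by simp [h])]

/-- Expansion of a product of two `Om` as a sum over pairs `j < l`. -/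
theorem Om_Om (ν : K) (X Y : ℤ → A) (f : Finset ℤ → A) (S : Finset ℤ) :
    ν • Om ν X (Om ν Y f) S = ∑ j ∈ S, ∑ l ∈ S, if j < l then
      ν ^ (ecnt S j + ecnt S l) • ((X j * Y l + ν • (X l * Y j)) * f ((S.erase j).erase l))
      else 0 := by
  have h1 : ν • Om ν X (Om ν Y f) S = ∑ j ∈ S, ∑ l ∈ S,
      ((if j < l then ν ^ (ecnt S j + ecnt S l) • (X j * Y l * f ((S.erase j).erase l)) else 0) +
       (if l < j then ν ^ (ecnt S j + ecnt S l + 1) • (X j * Y l * f ((S.erase j).erase l))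
        else 0)) := by
    simp only [Om, Finset.smul_sum]
    refine Finset.sum_congr rfl fun j hj => ?_
    rw [← Finset.add_sum_erase S _ hj]
    simp only [lt_irrefl, if_false, add_zero, zero_add, Finset.mul_sum, Finset.smul_sum]
    refine Finset.sum_congr rfl fun l hl => ?_
    have hne := Finset.ne_of_mem_erase hl
    rcases lt_or_gt_of_ne hne with h | h
    · rw [if_neg (by omega), if_pos h, ecnt_gt_erase h.le]
      simp only [mul_smul_comm, smul_smul, zero_add, mul_assoc]
      congr 1; ring
    · rw [if_pos h, if_neg (by omega), ← ecnt_lt_erase hj h]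
      simp only [mul_smul_comm, smul_smul, add_zero, mul_assoc]
      congr 1; ring
  rw [h1]
  simp only [Finset.sum_add_distrib]
  rw [Finset.sum_comm (s := S) (t := S) (f := fun j l => if l < j then _ else _),
    ← Finset.sum_add_distrib]
  refine Finset.sum_congr rfl fun j hj => ?_
  rw [← Finset.sum_add_distrib]
  refine Finset.sum_congr rfl fun l hl => ?_
  split_ifs with h
  · rw [Finset.erase_right_comm, add_mul, smul_add, smul_mul_assoc, smul_smul, pow_succ]
    rw [add_comm (ecnt S l)]
  · simp

theorem Om_comm (ν q : K) (hν : ν * -q = 1) (X Y : ℤ → A)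
    (h : ∀ j l, j < l → X j * Y l + ν • (X l * Y j) = -q • (Y j * X l + ν • (Y l * X j)))
    (f : Finset ℤ → A) : Om ν X (Om ν Y f) = -q • Om ν Y (Om ν X f) := by
  funext S
  have key : ν • Om ν X (Om ν Y f) S = ν • (-q • Om ν Y (Om ν X f) S) := by
    rw [smul_comm ν (-q), Om_Om, Om_Om, Finset.smul_sum]
    refine Finset.sum_congr rfl fun j _ => ?_
    rw [Finset.smul_sum]
    refine Finset.sum_congr rfl fun l _ => ?_
    split_ifs with hjl
    · rw [h j l hjl, smul_mul_assoc, smul_comm]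
    · simp
  have := congrArg (fun z => (-q) • z) key
  simp only [smul_smul] at this
  rw [mul_comm (-q) ν, hν, one_smul] at this
  rw [this, Pi.smul_apply, mul_one]

theorem Om_sq (ν q : K) (hν : ν * -q = 1) (X : ℤ → A)
    (h : ∀ j l, j < l → X j * X l + ν • (X l * X j) = 0)
    (f : Finset ℤ → A) : Om ν X (Om ν X f) = 0 := by
  funext S
  have key : ν • Om ν X (Om ν X f) S = 0 := by
    rw [Om_Om]
    refine Finset.sum_eq_zero fun j _ => Finset.sum_eq_zero fun l _ => ?_
    split_ifs with hjl
    · rw [h j l hjl]; simp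
    · rfl
  have := congrArg (fun z => (-q) • z) key
  simp only [smul_smul] at this
  rw [mul_comm (-q) ν, hν, one_smul] at this
  rw [this, smul_zero]; rfl

theorem OmL_append (ν : K) (X : ℤ → ℤ → A) (l1 l2 : List ℤ) (f : Finset ℤ → A) :
    OmL ν X (l1 ++ l2) f = OmL ν X l1 (OmL ν X l2 f) := by
  induction l1 with
  | nil => rfl
  | cons a l ih => simp only [List.cons_append, OmL, ih]

theorem Om_map {A' : Type*} [Ring A'] [Algebra K A'] (φ : A →ₐ[K] A') (ν : K) (X : ℤ → A)
    (f : Finset ℤ → A) (S : Finset ℤ) :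
    φ (Om ν X f S) = Om ν (fun j => φ (X j)) (fun T => φ (f T)) S := by
  simp [Om, map_sum]

theorem OmL_map {A' : Type*} [Ring A'] [Algebra K A'] (φ : A →ₐ[K] A') (ν : K) (X : ℤ → ℤ → A)
    (rs : List ℤ) (S : Finset ℤ) :
    φ (OmL ν X rs vac S) = OmL ν (fun i j => φ (X i j)) rs vac S := by
  induction rs generalizing S with
  | nil => simp [OmL, vac]
  | cons r rs ih =>
    simp only [OmL, Om_map]
    congr 1
    funext T
    exact ih T

theorem OmL_congr (ν : K) (X Y : ℤ → ℤ → A) (rs : List ℤ) (S : Finset ℤ) (f : Finset ℤ → A)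
    (h : ∀ i ∈ rs, ∀ j ∈ S, X i j = Y i j) : OmL ν X rs f S = OmL ν Y rs f S := by
  induction rs generalizing S with
  | nil => rfl
  | cons r rs ih =>
    simp only [OmL, Om]
    refine Finset.sum_congr rfl fun j hj => ?_
    rw [h r (by simp) j hj, ih]
    intro i hi l hl
    exact h i (by simp [hi]) l (Finset.mem_of_mem_erase hl)

/-- Scaling by a central element. -/
theorem OmL_scale (ν : K) (X : ℤ → ℤ → A) (c : A) (hc : ∀ a, Commute c a) (rs : List ℤ)
    (S : Finset ℤ) :
    OmL ν (fun i j => X i j * c) rs vac S = OmL ν X rs vac S * c ^ rs.length := by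
  induction rs generalizing S with
  | nil => simp [OmL]
  | cons r rs ih =>
    simp only [OmL, Om, Finset.sum_mul, List.length_cons]
    refine Finset.sum_congr rfl fun j hj => ?_
    rw [ih, smul_mul_assoc, pow_succ']
    congr 1
    simp only [mul_assoc]
    congr 1
    simp only [← mul_assoc]
    rw [(hc _).eq]

theorem OmL_ne_card (ν : K) (X : ℤ → ℤ → A) (rs : List ℤ) (S : Finset ℤ)
    (h : S.card ≠ rs.length) : OmL ν X rs vac S = 0 := by
  induction rs generalizing S with
  | nil =>
    simp only [OmL, vac]
    rw [if_neg]
    rintro rfl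
    simp at h
  | cons r rs ih =>
    simp only [OmL, Om]
    refine Finset.sum_eq_zero fun j hj => ?_
    rw [ih, mul_zero, smul_zero]
    rw [Finset.card_erase_of_mem hj]
    have := Finset.card_pos.2 ⟨j, hj⟩
    simp at h
    omega

/-- The permutation of `Fin (n+1)` with `0 ↦ j` and the rest given by `e`. -/
def permIns {n : ℕ} (p : Fin (n + 1) × Equiv.Perm (Fin n)) : Equiv.Perm (Fin (n + 1)) :=
  (Fin.cycleRange p.1)⁻¹ * Equiv.Perm.decomposeFin.symm (0, p.2)

theorem permIns_zero {n : ℕ} (p : Fin (n + 1) × Equiv.Perm (Fin n)) : permIns p 0 = p.1 := by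
  simp [permIns]

theorem permIns_succ {n : ℕ} (p : Fin (n + 1) × Equiv.Perm (Fin n)) (t : Fin n) :
    permIns p t.succ = p.1.succAbove (p.2 t) := by
  simp [permIns]

theorem permIns_bij {n : ℕ} : Function.Bijective (permIns (n := n)) := by
  rw [Fintype.bijective_iff_injective_and_card]
  constructor
  · rintro ⟨j, e⟩ ⟨j', e'⟩ h
    have h0 : j = j' := by
      have := congrArg (fun s => s 0) h
      simpa [permIns_zero] using this
    subst h0
    congr 1
    ext t
    have := congrArg (fun s => s t.succ) h
    simp only [permIns_succ] at this
    exact congrArg Fin.val (Fin.succAbove_right_injective this)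
  · simp [Fintype.card_perm, Nat.factorial_succ]

theorem inversions_permIns {n : ℕ} (p : Fin (n + 1) × Equiv.Perm (Fin n)) :
    inversions (permIns p) = p.1 + inversions p.2 := by
  have h : ∀ {a b : ℕ} (f : Fin a → Fin b), inversions f =
      ∑ s : Fin a, ∑ t : Fin a, if s < t ∧ f t < f s then 1 else 0 := by
    intro a b f
    rw [inversions, Finset.card_filter, ← Finset.univ_product_univ, Finset.sum_product]
  rw [h, h, Fin.sum_univ_succ]
  congr 1
  · rw [Fin.sum_univ_succ]
    simp only [permIns_zero, permIns_succ, lt_irrefl, false_and, if_false, zero_add, Fin.succ_pos,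
      true_and]
    rw [Equiv.sum_comp p.2 (fun t => if p.1.succAbove t < p.1 then 1 else 0)]
    simp only [Fin.succAbove_lt_iff_castSucc_lt]
    rw [← Finset.card_filter]
    have : (Finset.univ.filter fun t : Fin n => t.castSucc < p.1) =
        Finset.univ.filter fun t : Fin n => (t : ℕ) < p.1 := by
      ext t; simp [Fin.lt_def]
    rw [this, Fin.card_filter_val_lt]
    have := p.1.2
    omega
  · refine Finset.sum_congr rfl fun s _ => ?_
    rw [Fin.sum_univ_succ]
    simp [permIns_succ, Fin.succAbove_lt_succAbove_iff]

theorem ecnt_image {s : ℕ} (col : Fin s → ℤ) (hc : StrictMono col) (u : Fin s) :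
    ecnt (Finset.univ.image col) (col u) = u := by
  unfold ecnt
  rw [Finset.filter_image, Finset.card_image_of_injective _ hc.injective]
  simp only [hc.lt_iff_lt]
  have : (Finset.univ.filter fun t : Fin s => t < u) = Finset.Iio u := by ext; simp
  rw [this, Fin.card_Iio]

theorem image_erase {s : ℕ} (col : Fin (s + 1) → ℤ) (hc : StrictMono col) (u : Fin (s + 1)) :
    (Finset.univ.image col).erase (col u) =
      Finset.univ.image (fun t => col (u.succAbove t)) := by
  ext z
  simp only [Finset.mem_erase, Finset.mem_image, Finset.mem_univ, true_and]
  constructor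
  · rintro ⟨h, t, rfl⟩
    have : t ≠ u := fun e => h (by rw [e])
    obtain ⟨w, rfl⟩ := Fin.exists_succAbove_eq this
    exact ⟨w, rfl⟩
  · rintro ⟨t, rfl⟩
    exact ⟨fun e => Fin.succAbove_ne u t (hc.injective e), _, rfl⟩

/-- The quantum determinant as an iterated `Om`. -/
theorem qdet_eq (ν : K) (X : ℤ → ℤ → A) (s : ℕ) (row col : Fin s → ℤ) (hc : StrictMono col) :
    ∑ σ : Equiv.Perm (Fin s), ν ^ inversions σ •
      (List.ofFn fun t : Fin s => X (row t) (col (σ t))).prod =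
    OmL ν X (List.ofFn row) vac (Finset.univ.image col) := by
  induction s with
  | zero => simp [OmL, vac, inversions]
  | succ s ih =>
    rw [← permIns_bij.sum_comp, ← Finset.univ_product_univ, Finset.sum_product]
    simp only [List.ofFn_succ, OmL, Om]
    rw [Finset.sum_image (fun a _ b _ h => hc.injective h)]
    refine Finset.sum_congr rfl fun u _ => ?_
    rw [ecnt_image col hc, image_erase col hc,
      ← ih (fun t => row t.succ) (fun t => col (u.succAbove t))
        (hc.comp (Fin.strictMono_succAbove u)), Finset.mul_sum, Finset.smul_sum]
    refine Finset.sum_congr rfl fun e _ => ?_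
    rw [inversions_permIns, permIns_zero]
    simp only [permIns_succ, List.prod_cons]
    rw [mul_smul_comm, smul_smul, pow_add]

end Fock

section Schur

variable {K A : Type*} [CommRing K] [Ring A] [Algebra K A]

/-- The quantum matrix relations for rows in `R` and columns in `C`. -/
structure IsQ (q q' : K) (R C : Set ℤ) (X : ℤ → ℤ → A) : Prop where
  col : ∀ i ∈ R, ∀ k ∈ R, ∀ j ∈ C, i < k → X i j * X k j = q' • (X k j * X i j)
  row : ∀ i ∈ R, ∀ j ∈ C, ∀ l ∈ C, j < l → X i j * X i l = q' • (X i l * X i j)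
  comm : ∀ i ∈ R, ∀ k ∈ R, ∀ j ∈ C, ∀ l ∈ C, i < k → l < j → X i j * X k l = X k l * X i j
  qcomm : ∀ i ∈ R, ∀ k ∈ R, ∀ j ∈ C, ∀ l ∈ C, i < k → j < l →
    X i j * X k l = X k l * X i j + (q' - q) • (X k j * X i l)

theorem IsQ.scale {q q' : K} {R C : Set ℤ} {X : ℤ → ℤ → A} (h : IsQ q q' R C X) (α β : ℤ → K) :
    IsQ q q' R C (fun i j => (α i * β j) • X i j) where
  col i hi k hk j hj hik := by
    simp only [smul_mul_smul_comm, h.col i hi k hk j hj hik, smul_smul]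
    congr 1; ring
  row i hi j hj l hl hjl := by
    simp only [smul_mul_smul_comm, h.row i hi j hj l hl hjl, smul_smul]
    congr 1; ring
  comm i hi k hk j hj l hl hik hjl := by
    simp only [smul_mul_smul_comm, h.comm i hi k hk j hj l hl hik hjl]
    congr 1; ring
  qcomm i hi k hk j hj l hl hik hjl := by
    simp only [smul_mul_smul_comm, h.qcomm i hi k hk j hj l hl hik hjl, smul_smul, smul_add]
    congr 1
    · congr 1; ring
    · congr 1; ring

theorem IsQ.restrict {q q' : K} {R C : Set ℤ} {X : ℤ → ℤ → A} (h : IsQ q q' R C X)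
    (h0 : ∀ i j, ¬ (i ∈ R ∧ j ∈ C) → X i j = 0) :
    IsQ q q' Set.univ Set.univ X where
  col i _ k _ j _ hik := by
    by_cases h1 : i ∈ R ∧ j ∈ C
    · by_cases h2 : k ∈ R ∧ j ∈ C
      · exact h.col i h1.1 k h2.1 j h1.2 hik
      · simp [h0 _ _ h2]
    · simp [h0 _ _ h1]
  row i _ j _ l _ hjl := by
    by_cases h1 : i ∈ R ∧ j ∈ C
    · by_cases h2 : i ∈ R ∧ l ∈ C
      · exact h.row i h1.1 j h1.2 l h2.2 hjl
      · simp [h0 _ _ h2]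
    · simp [h0 _ _ h1]
  comm i _ k _ j _ l _ hik hjl := by
    by_cases h1 : i ∈ R ∧ j ∈ C
    · by_cases h2 : k ∈ R ∧ l ∈ C
      · exact h.comm i h1.1 k h2.1 j h1.2 l h2.2 hik hjl
      · simp [h0 _ _ h2]
    · simp [h0 _ _ h1]
  qcomm i _ k _ j _ l _ hik hjl := by
    by_cases h1 : i ∈ R ∧ j ∈ C
    · by_cases h2 : k ∈ R ∧ l ∈ C
      · exact h.qcomm i h1.1 k h2.1 j h1.2 l h2.2 hik hjl
      · have : X k j * X i l = 0 := by
          by_cases hk : k ∈ R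
          · rw [h0 i l (fun h => h2 ⟨hk, h.2⟩), mul_zero]
          · rw [h0 k j (fun h => hk h.1), zero_mul]
        simp [h0 _ _ h2, this]
    · have : X k j * X i l = 0 := by
        by_cases hi : i ∈ R
        · rw [h0 k j (fun h => h1 ⟨hi, h.2⟩), zero_mul]
        · rw [h0 i l (fun h => hi h.1), mul_zero]
      simp [h0 _ _ h1, this]

theorem IsQ.om_comm {q q' : K} (hq : q * q' = 1) {X : ℤ → ℤ → A}
    (h : IsQ q q' Set.univ Set.univ X) {i k : ℤ} (hik : i < k) (f : Finset ℤ → A) :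
    Om (-q') (X i) (Om (-q') (X k) f) = -q • Om (-q') (X k) (Om (-q') (X i) f) := by
  refine Om_comm (-q') q (by linear_combination hq) _ _ (fun j l hjl => ?_) f
  rw [h.qcomm i trivial k trivial j trivial l trivial hik hjl,
    h.comm i trivial k trivial l trivial j trivial hik hjl]
  match_scalars <;> (clear * - hq; grind)

theorem IsQ.om_sq {q q' : K} (hq : q * q' = 1) {X : ℤ → ℤ → A}
    (h : IsQ q q' Set.univ Set.univ X) (i : ℤ) (f : Finset ℤ → A) :
    Om (-q') (X i) (Om (-q') (X i) f) = 0 := by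
  refine Om_sq (-q') q (by linear_combination hq) _ (fun j l hjl => ?_) f
  rw [h.row i trivial j trivial l trivial hjl]
  match_scalars; ring

/-- The `2 × 2` minors bordering the entry `(p, p)`. -/
def Bm (q' : K) (p : ℤ) (X : ℤ → ℤ → A) (i j : ℤ) : A :=
  if p < i ∧ p < j then X p p * X i j - q' • (X i p * X p j) else 0

section calc2

variable {q q' : K} {X : ℤ → ℤ → A} {p : ℤ}

theorem Bm_of (q' : K) (X : ℤ → ℤ → A) {p i j : ℤ} (hi : p < i) (hj : p < j) :
    Bm q' p X i j = X p p * X i j - q' • (X i p * X p j) := if_pos ⟨hi, hj⟩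


theorem qflip (hq : q * q' = 1)
    {a b : A} (h : a * b = q' • (b * a)) : b * a = q • (a * b) := by
  rw [h, smul_smul, hq, one_smul]


theorem Bm_right (hq : q * q' = 1) (h : IsQ q q' Set.univ Set.univ X)
    {i j : ℤ} (hi : p < i) (hj : p < j) :
    Bm q' p X i j = X i j * X p p - q • (X i p * X p j) := by
  rw [Bm_of q' X hi hj, h.qcomm p trivial i trivial p trivial j trivial hi hj]
  match_scalars <;> ring

theorem Bm_x (hq : q * q' = 1) (h : IsQ q q' Set.univ Set.univ X)
    {i j : ℤ} : X p p * Bm q' p X i j = Bm q' p X i j * X p p := by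
  by_cases hij : p < i ∧ p < j
  · obtain ⟨hi, hj⟩ := hij
    conv_lhs => rw [Bm_right hq h hi hj]
    rw [Bm_of q' X hi hj]
    have e1 : X p p * (X i p * X p j) = (q' * q') • (X i p * X p j * X p p) := by
      rw [← mul_assoc, h.col p trivial i trivial p trivial hi, smul_mul_assoc, mul_assoc,
        h.row p trivial p trivial j trivial hj, mul_smul_comm, smul_smul, mul_assoc]
    rw [mul_sub, sub_mul, mul_smul_comm, e1, smul_mul_assoc, smul_smul, mul_assoc (X p p)]
    match_scalars <;> (clear * - hq; grind)
  · rw [Bm, if_neg hij, mul_zero, zero_mul]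

/-- commutation with the entries of row `p` -/
theorem Bm_u_same (hq : q * q' = 1) (h : IsQ q q' Set.univ Set.univ X)
    {i j : ℤ} (hi : p < i) (hj : p < j) :
    X p j * Bm q' p X i j = Bm q' p X i j * X p j := by
  conv_lhs => rw [Bm_of q' X hi hj]
  conv_rhs => rw [Bm_of q' X hi hj]
  have e1 := qflip hq (h.row p trivial p trivial j trivial hj)
  have e2 := h.col p trivial i trivial j trivial hi
  have e3 := h.comm p trivial i trivial j trivial p trivial hi hj
  have e1' := fun t => congrArg (· * t) e1
  simp only [mul_assoc, smul_mul_assoc] at e1'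
  have e3' := fun t => congrArg (· * t) e3
  simp only [mul_assoc, smul_mul_assoc] at e3'
  simp only [mul_sub, sub_mul, mul_smul_comm, smul_mul_assoc, mul_assoc, e1', e3', e2, smul_smul]
  match_scalars <;> (clear * - hq; grind)

theorem Bm_u_lt (hq : q * q' = 1) (h : IsQ q q' Set.univ Set.univ X)
    {i j l : ℤ} (hi : p < i) (hj : p < j) (hl : p < l) (hjl : j < l) :
    X p l * Bm q' p X i j = q • (Bm q' p X i j * X p l) := by
  conv_lhs => rw [Bm_of q' X hi hj]
  conv_rhs => rw [Bm_of q' X hi hj]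
  have e1 := qflip hq (h.row p trivial p trivial l trivial hl)
  have e2 := h.comm p trivial i trivial l trivial j trivial hi hjl
  have e3 := h.comm p trivial i trivial l trivial p trivial hi hl
  have e4 := qflip hq (h.row p trivial j trivial l trivial hjl)
  have e1' := fun t => congrArg (· * t) e1
  simp only [mul_assoc, smul_mul_assoc] at e1'
  have e3' := fun t => congrArg (· * t) e3
  simp only [mul_assoc, smul_mul_assoc] at e3'
  simp only [mul_sub, sub_mul, mul_smul_comm, smul_mul_assoc, mul_assoc, e1', e3', e2, e4,
    smul_smul]
  match_scalars <;> ring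

theorem Bm_u_gt (hq : q * q' = 1) (h : IsQ q q' Set.univ Set.univ X)
    {i j l : ℤ} (hi : p < i) (hj : p < j) (hl : p < l) (hjl : l < j) :
    X p l * Bm q' p X i j = q • (Bm q' p X i j * X p l) + (q * (q' - q)) • (Bm q' p X i l * X p j) := by
  conv_lhs => rw [Bm_of q' X hi hj]
  conv_rhs => rw [Bm_of q' X hi hj, Bm_of q' X hi hl]
  have e1 := qflip hq (h.row p trivial p trivial l trivial hl)
  have e2 := h.qcomm p trivial i trivial l trivial j trivial hi hjl
  have e3 := h.comm p trivial i trivial l trivial p trivial hi hl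
  have e4 := h.row p trivial l trivial j trivial hjl
  have e1' := fun t => congrArg (· * t) e1
  simp only [mul_assoc, smul_mul_assoc] at e1'
  have e3' := fun t => congrArg (· * t) e3
  simp only [mul_assoc, smul_mul_assoc] at e3'
  simp only [mul_sub, mul_add, sub_mul, mul_smul_comm, smul_mul_assoc, mul_assoc, e1', e3', e2, e4,
    smul_smul, smul_add, smul_sub]
  match_scalars <;> (clear * - hq; grind)

theorem Bm_v_same (hq : q * q' = 1) (h : IsQ q q' Set.univ Set.univ X)
    {i j : ℤ} (hi : p < i) (hj : p < j) :
    X i p * Bm q' p X i j = Bm q' p X i j * X i p := by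
  conv_lhs => rw [Bm_of q' X hi hj]
  conv_rhs => rw [Bm_of q' X hi hj]
  have e1 := qflip hq (h.col p trivial i trivial p trivial hi)
  have e2 := h.row i trivial p trivial j trivial hj
  have e3 := h.comm p trivial i trivial j trivial p trivial hi hj
  have e1' := fun t => congrArg (· * t) e1
  simp only [mul_assoc, smul_mul_assoc] at e1'
  simp only [mul_sub, sub_mul, mul_smul_comm, smul_mul_assoc, mul_assoc, e1', e3, e2, smul_smul]
  match_scalars <;> (clear * - hq; grind)

theorem Bm_v_lt (hq : q * q' = 1) (h : IsQ q q' Set.univ Set.univ X)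
    {i j k : ℤ} (hi : p < i) (hj : p < j) (hk : p < k) (hik : i < k) :
    X k p * Bm q' p X i j = q • (Bm q' p X i j * X k p) := by
  conv_lhs => rw [Bm_of q' X hi hj]
  conv_rhs => rw [Bm_of q' X hi hj]
  have e1 := qflip hq (h.col p trivial k trivial p trivial hk)
  have e2 := h.comm i trivial k trivial j trivial p trivial hik hj
  have e3 := h.comm p trivial k trivial j trivial p trivial hk hj
  have e4 := qflip hq (h.col i trivial k trivial p trivial hik)
  have e1' := fun t => congrArg (· * t) e1
  simp only [mul_assoc, smul_mul_assoc] at e1'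
  have e4' := fun t => congrArg (· * t) e4
  simp only [mul_assoc, smul_mul_assoc] at e4'
  simp only [mul_sub, sub_mul, mul_smul_comm, smul_mul_assoc, mul_assoc, e1', e3, e2, e4',
    smul_smul]
  match_scalars <;> ring

theorem Bm_v_gt (hq : q * q' = 1) (h : IsQ q q' Set.univ Set.univ X)
    {i j k : ℤ} (hi : p < i) (hj : p < j) (hk : p < k) (hik : k < i) :
    X k p * Bm q' p X i j = q • (Bm q' p X i j * X k p) + (q' - q) • (X i p * Bm q' p X k j) := by
  conv_lhs => rw [Bm_of q' X hi hj]
  conv_rhs => rw [Bm_of q' X hi hj, Bm_of q' X hk hj]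
  have e1 := qflip hq (h.col p trivial k trivial p trivial hk)
  have e1i := qflip hq (h.col p trivial i trivial p trivial hi)
  have e2 := h.qcomm k trivial i trivial p trivial j trivial hik hj
  have e3 := h.comm p trivial k trivial j trivial p trivial hk hj
  have e4 := h.col k trivial i trivial p trivial hik
  have e1' := fun t => congrArg (· * t) e1
  simp only [mul_assoc, smul_mul_assoc] at e1'
  have e1i' := fun t => congrArg (· * t) e1i
  simp only [mul_assoc, smul_mul_assoc] at e1i'
  have e4' := fun t => congrArg (· * t) e4
  simp only [mul_assoc, smul_mul_assoc] at e4'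
  simp only [mul_sub, mul_add, sub_mul, mul_smul_comm, smul_mul_assoc, mul_assoc, e1', e1i', e3, e2,
    e4', smul_smul, smul_add, smul_sub]
  match_scalars <;> (clear * - hq; grind)

/-- `x a_{ij} a_{kl} x` expanded in the `B`'s. -/
theorem Bm_expand (hq : q * q' = 1) (h : IsQ q q' Set.univ Set.univ X)
    {i j k l : ℤ} (hi : p < i) (hj : p < j) (hk : p < k) (hl : p < l) :
    X p p * (X i j * X k l) * X p p = Bm q' p X i j * Bm q' p X k l +
      q • (Bm q' p X i j * (X k p * X p l)) + q' • (X i p * (X p j * Bm q' p X k l)) +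
      X i p * X p j * (X k p * X p l) := by
  have e1 : X p p * X i j = Bm q' p X i j + q' • (X i p * X p j) := by
    rw [Bm_of q' X hi hj]; abel
  have e2 : X k l * X p p = Bm q' p X k l + q • (X k p * X p l) := by
    rw [Bm_right hq h hk hl]; abel
  have : X p p * (X i j * X k l) * X p p = (X p p * X i j) * (X k l * X p p) := by
    simp only [mul_assoc]
  rw [this, e1, e2]
  simp only [add_mul, mul_add, mul_smul_comm, smul_mul_assoc, mul_assoc, smul_smul, smul_add]
  match_scalars <;> (clear * - hq; grind)

theorem Bm_col (hq : q * q' = 1) (h : IsQ q q' Set.univ Set.univ X)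
    {i j k : ℤ} (hi : p < i) (hj : p < j) (hk : p < k) (hik : i < k) :
    Bm q' p X i j * Bm q' p X k j = q' • (Bm q' p X k j * Bm q' p X i j) := by
  have E := congrArg (fun z => X p p * z * X p p)
    (h.col i trivial k trivial j trivial hik)
  simp only [mul_smul_comm, smul_mul_assoc] at E
  rw [Bm_expand hq h hi hj hk hj, Bm_expand hq h hk hj hi hj] at E
  have u1 := Bm_u_same hq h hi hj
  have u2 := Bm_u_same hq h hk hj
  have v1 := Bm_v_lt hq h hi hj hk hik
  have v2 := Bm_v_gt hq h hk hj hi hik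
  have vv := h.col i trivial k trivial p trivial hik
  have uv1 := h.comm p trivial i trivial j trivial p trivial hi hj
  have uv2 := h.comm p trivial k trivial j trivial p trivial hk hj
  have v1' := fun t => congrArg (· * t) v1
  have v2' := fun t => congrArg (· * t) v2
  have vv' := fun t => congrArg (· * t) vv
  have uv1' := fun t => congrArg (· * t) uv1
  have uv2' := fun t => congrArg (· * t) uv2
  simp only [mul_assoc, smul_mul_assoc, add_mul, smul_add, mul_add, smul_smul, mul_smul_comm]
    at v1' v2' vv' uv1' uv2'
  simp only [mul_assoc, smul_mul_assoc, add_mul, smul_add, mul_add, smul_smul, mul_smul_comm,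
    u1, u2, v1', v2', vv', uv1', uv2'] at E
  linear_combination (norm := (match_scalars <;> (clear * - hq; grind))) E

theorem Bm_row (hq : q * q' = 1) (h : IsQ q q' Set.univ Set.univ X)
    {i j l : ℤ} (hi : p < i) (hj : p < j) (hl : p < l) (hjl : j < l) :
    Bm q' p X i j * Bm q' p X i l = q' • (Bm q' p X i l * Bm q' p X i j) := by
  have E := congrArg (fun z => X p p * z * X p p)
    (h.row i trivial j trivial l trivial hjl)
  simp only [mul_smul_comm, smul_mul_assoc] at E
  rw [Bm_expand hq h hi hj hi hl, Bm_expand hq h hi hl hi hj] at E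
  have u1 := Bm_u_lt hq h hi hj hl hjl
  have u2 := Bm_u_gt hq h hi hl hj hjl
  have v1 := Bm_v_same hq h hi hj
  have v2 := Bm_v_same hq h hi hl
  have uu := h.row p trivial j trivial l trivial hjl
  have uv1 := h.comm p trivial i trivial j trivial p trivial hi hj
  have uv2 := h.comm p trivial i trivial l trivial p trivial hi hl
  have v1' := fun t => congrArg (· * t) v1
  have v2' := fun t => congrArg (· * t) v2
  have uv1' := fun t => congrArg (· * t) uv1
  have uv2' := fun t => congrArg (· * t) uv2
  simp only [mul_assoc, smul_mul_assoc, add_mul, smul_add, mul_add, smul_smul, mul_smul_comm]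
    at v1' v2' uv1' uv2'
  simp only [mul_assoc, smul_mul_assoc, add_mul, smul_add, mul_add, smul_smul, mul_smul_comm,
    u1, u2, v1', v2', uu, uv1', uv2'] at E
  linear_combination (norm := (match_scalars <;> (clear * - hq; grind))) E

theorem Bm_comm (hq : q * q' = 1) (h : IsQ q q' Set.univ Set.univ X)
    {i j k l : ℤ} (hi : p < i) (hj : p < j) (hk : p < k) (hl : p < l) (hik : i < k)
    (hlj : l < j) :
    Bm q' p X i j * Bm q' p X k l = Bm q' p X k l * Bm q' p X i j := by
  have E := congrArg (fun z => X p p * z * X p p)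
    (h.comm i trivial k trivial j trivial l trivial hik hlj)
  rw [Bm_expand hq h hi hj hk hl, Bm_expand hq h hk hl hi hj] at E
  have u1 := Bm_u_gt hq h hi hj hl hlj
  have u2 := Bm_u_lt hq h hk hl hj hlj
  have v1 := Bm_v_lt hq h hi hj hk hik
  have v2 := Bm_v_gt hq h hk hl hi hik
  have v3 := Bm_v_lt hq h hi hl hk hik
  have vv := h.col i trivial k trivial p trivial hik
  have uu := h.row p trivial l trivial j trivial hlj
  have uv1 := h.comm p trivial i trivial l trivial p trivial hi hl
  have uv2 := h.comm p trivial k trivial j trivial p trivial hk hj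
  have v1' := fun t => congrArg (· * t) v1
  have v2' := fun t => congrArg (· * t) v2
  have v3' := fun t => congrArg (· * t) v3
  have vv' := fun t => congrArg (· * t) vv
  have uv1' := fun t => congrArg (· * t) uv1
  have uv2' := fun t => congrArg (· * t) uv2
  simp only [mul_assoc, smul_mul_assoc, add_mul, smul_add, mul_add, smul_smul, mul_smul_comm]
    at v1' v2' v3' vv' uv1' uv2'
  simp only [mul_assoc, smul_mul_assoc, add_mul, smul_add, mul_add, smul_smul, mul_smul_comm,
    u1, u2, v1', v2', v3', vv', uu, uv1', uv2'] at E
  linear_combination (norm := (match_scalars <;> (clear * - hq; grind))) E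

theorem Bm_qcomm (hq : q * q' = 1) (h : IsQ q q' Set.univ Set.univ X)
    {i j k l : ℤ} (hi : p < i) (hj : p < j) (hk : p < k) (hl : p < l) (hik : i < k)
    (hjl : j < l) :
    Bm q' p X i j * Bm q' p X k l = Bm q' p X k l * Bm q' p X i j +
      (q' - q) • (Bm q' p X k j * Bm q' p X i l) := by
  have E := congrArg (fun z => X p p * z * X p p)
    (h.qcomm i trivial k trivial j trivial l trivial hik hjl)
  simp only [mul_smul_comm, smul_mul_assoc, mul_add, add_mul] at E
  rw [Bm_expand hq h hi hj hk hl, Bm_expand hq h hk hl hi hj, Bm_expand hq h hk hj hi hl] at E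
  have u1 := Bm_u_lt hq h hi hj hl hjl
  have u2 := Bm_u_gt hq h hk hl hj hjl
  have u3 := Bm_u_gt hq h hi hl hj hjl
  have v1 := Bm_v_lt hq h hi hj hk hik
  have v2 := Bm_v_gt hq h hk hl hi hik
  have v3 := Bm_v_lt hq h hi hl hk hik
  have v4 := Bm_v_gt hq h hk hj hi hik
  have vv := h.col i trivial k trivial p trivial hik
  have uu := h.row p trivial j trivial l trivial hjl
  have uv1 := h.comm p trivial i trivial l trivial p trivial hi hl
  have uv2 := h.comm p trivial k trivial j trivial p trivial hk hj
  have uv3 := h.comm p trivial i trivial j trivial p trivial hi hj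
  have uv4 := h.comm p trivial k trivial l trivial p trivial hk hl
  have v1' := fun t => congrArg (· * t) v1
  have v2' := fun t => congrArg (· * t) v2
  have v3' := fun t => congrArg (· * t) v3
  have v4' := fun t => congrArg (· * t) v4
  have vv' := fun t => congrArg (· * t) vv
  have uv1' := fun t => congrArg (· * t) uv1
  have uv2' := fun t => congrArg (· * t) uv2
  have uv3' := fun t => congrArg (· * t) uv3
  have uv4' := fun t => congrArg (· * t) uv4
  simp only [mul_assoc, smul_mul_assoc, add_mul, smul_add, mul_add, smul_smul, mul_smul_comm]
    at v1' v2' v3' v4' vv' uv1' uv2' uv3' uv4'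
  simp only [mul_assoc, smul_mul_assoc, add_mul, smul_add, mul_add, smul_smul, mul_smul_comm,
    u1, u2, u3, v1', v2', v3', v4', vv', uu, uv1', uv2', uv3', uv4'] at E
  linear_combination (norm := (match_scalars <;> (clear * - hq; grind))) E

theorem Bm_isQ (hq : q * q' = 1) (h : IsQ q q' Set.univ Set.univ X)
    : IsQ q q' Set.univ Set.univ (Bm q' p X) := by
  refine IsQ.restrict (R := Set.Ioi p) (C := Set.Ioi p) ⟨?_, ?_, ?_, ?_⟩ ?_
  · intro i hi k hk j hj hik
    exact Bm_col hq h hi hj hk hik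
  · intro i hi j hj l hl hjl
    exact Bm_row hq h hi hj hl hjl
  · intro i hi k hk j hj l hl hik hjl
    exact Bm_comm hq h hi hj hk hl hik hjl
  · intro i hi k hk j hj l hl hik hjl
    exact Bm_qcomm hq h hi hj hk hl hik hjl
  · intro i j hij
    exact if_neg hij

end calc2

end Schur

section Det

variable {K A : Type*} [CommRing K] [Ring A] [Algebra K A]

theorem Om_lmul (ν : K) (Y : ℤ → A) (a : A) (ha : ∀ j, a * Y j = Y j * a) (f : Finset ℤ → A)
    (S : Finset ℤ) : a * Om ν Y f S = Om ν Y (fun T => a * f T) S := by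
  simp only [Om, Finset.mul_sum, mul_smul_comm]
  refine Finset.sum_congr rfl fun j _ => ?_
  rw [← mul_assoc, ha, mul_assoc]

theorem OmL_lmul (ν : K) (Y : ℤ → ℤ → A) (a : A) (ha : ∀ i j, a * Y i j = Y i j * a)
    (rs : List ℤ) (f : Finset ℤ → A) (S : Finset ℤ) :
    a * OmL ν Y rs f S = OmL ν Y rs (fun T => a * f T) S := by
  induction rs generalizing S with
  | nil => rfl
  | cons r rs ih =>
    simp only [OmL]
    rw [Om_lmul _ _ _ (ha r)]
    congr 1
    funext T
    exact ih T

theorem OmL_comm_of (ν : K) (Y : ℤ → ℤ → A) (a : A) (ha : ∀ i j, a * Y i j = Y i j * a)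
    (rs : List ℤ) (S : Finset ℤ) :
    a * OmL ν Y rs vac S = OmL ν Y rs vac S * a := by
  induction rs generalizing S with
  | nil => simp only [OmL, vac]; split_ifs <;> simp
  | cons r rs ih =>
    simp only [OmL, Om, Finset.mul_sum, Finset.sum_mul, mul_smul_comm, smul_mul_assoc]
    refine Finset.sum_congr rfl fun j _ => ?_
    rw [← mul_assoc, ha, mul_assoc, ih, mul_assoc]

section
variable {q q' : K} {X : ℤ → ℤ → A} {p : ℤ}

theorem Om_p_OmL (hq : q * q' = 1) (h : IsQ q q' Set.univ Set.univ X)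
    (rs : List ℤ) (hrs : ∀ i ∈ rs, p < i) (f : Finset ℤ → A) :
    Om (-q') (X p) (OmL (-q') X rs f) = (-q) ^ rs.length • OmL (-q') X rs (Om (-q') (X p) f) := by
  induction rs with
  | nil => simp [OmL]
  | cons i rs ih =>
    simp only [OmL]
    rw [h.om_comm hq (hrs i (by simp)), ih (fun i hi => hrs i (by simp [hi])), Om_smul, smul_smul,
      List.length_cons, pow_succ']

theorem x_Om (hq : q * q' = 1) (h : IsQ q q' Set.univ Set.univ X)
    (h0 : ∀ i j, j < p → X i j = 0) {i : ℤ} (hi : p < i) (f : Finset ℤ → A)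
    (S : Finset ℤ) :
    X p p * Om (-q') (X i) f S = q' • (X i p * Om (-q') (X p) f S) +
      Om (-q') (Bm q' p X i) f S := by
  simp only [Om, Finset.mul_sum, Finset.smul_sum, ← Finset.sum_add_distrib]
  refine Finset.sum_congr rfl fun j _ => ?_
  have e : X p p * X i j = q' • (X i p * X p j) + Bm q' p X i j := by
    rcases lt_trichotomy p j with hj | hj | hj
    · rw [Bm_of q' X hi hj]; abel
    · subst hj
      rw [h.col p trivial i trivial p trivial hi, Bm, if_neg (by simp), add_zero]
    · rw [h0 i j hj, h0 p j hj, Bm, if_neg (by rintro ⟨_, h⟩; exact lt_asymm h hj)]; simp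
  rw [mul_smul_comm, ← mul_assoc, e]
  simp only [add_mul, smul_mul_assoc, mul_assoc, smul_add, mul_smul_comm]
  rw [smul_comm]

theorem x_pow_OmL (hq : q * q' = 1) (h : IsQ q q' Set.univ Set.univ X)
    (h0 : ∀ i j, j < p → X i j = 0) (rs : List ℤ) (hrs : ∀ i ∈ rs, p < i)
    (S : Finset ℤ) :
    X p p ^ rs.length * OmL (-q') X rs (Om (-q') (X p) vac) S =
      OmL (-q') (Bm q' p X) rs (Om (-q') (X p) vac) S := by
  induction rs generalizing S with
  | nil => simp [OmL]
  | cons i rs ih =>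
    have hrs' : ∀ i ∈ rs, p < i := fun i hi => hrs i (by simp [hi])
    simp only [OmL]
    rw [List.length_cons, pow_succ, mul_assoc, x_Om hq h h0 (hrs i (by simp)),
      Om_p_OmL hq h rs hrs', h.om_sq hq]
    have hz : OmL (-q') X rs 0 = 0 := by
      clear ih hrs hrs'
      induction rs with
      | nil => rfl
      | cons i rs ih => simp only [OmL, ih, Om_zero]
    rw [hz]
    simp only [smul_zero, Pi.zero_apply, mul_zero, zero_add]
    rw [Om_lmul]
    · congr 1
      funext T
      exact ih hrs' T
    · intro j
      have : Commute (X p p) (Bm q' p X i j) := Bm_x hq h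
      exact this.pow_left _

theorem OmL_Bm_insert (q' : K) (X : ℤ → ℤ → A) (p : ℤ) (rs : List ℤ) (T : Finset ℤ)
    (hT : ∀ j ∈ T, p < j) :
    OmL (-q') (Bm q' p X) rs (Om (-q') (X p) vac) (insert p T) =
      (-q') ^ rs.length • (OmL (-q') (Bm q' p X) rs vac T * X p p) := by
  have hp : ∀ T : Finset ℤ, (∀ j ∈ T, p < j) → p ∉ T := fun T hT h => lt_irrefl _ (hT p h)
  induction rs generalizing T with
  | nil =>
    simp only [OmL, Om, List.length_nil, pow_zero, one_smul]
    rw [Finset.sum_insert (hp T hT), Finset.erase_insert (hp T hT), Finset.sum_eq_zero, add_zero]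
    · by_cases hT0 : T = ∅
      · subst hT0; simp [vac, ecnt, Finset.filter_singleton]
      · simp [vac, hT0]
    · intro j hj
      have : (insert p T).erase j ≠ ∅ := by
        rw [← Finset.nonempty_iff_ne_empty]
        exact ⟨p, by simp [(hT j hj).ne]⟩
      simp [vac, this]
  | cons i rs ih =>
    simp only [OmL]
    conv_lhs => rw [Om]
    conv_rhs => rw [Om]
    rw [Finset.sum_insert (hp T hT)]
    have : Bm q' p X i p = 0 := by simp [Bm]
    rw [this, zero_mul, smul_zero, zero_add, Finset.sum_mul, Finset.smul_sum]
    refine Finset.sum_congr rfl fun j hj => ?_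
    have hpj := hT j hj
    have e1 : (insert p T).erase j = insert p (T.erase j) := by
      rw [Finset.erase_insert_of_ne hpj.ne]
    have e2 : ecnt (insert p T) j = ecnt T j + 1 := by
      rw [← ecnt_lt_erase (Finset.mem_insert_self p T) hpj, Finset.erase_insert (hp T hT)]
    rw [e1, e2, ih _ (fun l hl => hT l (Finset.mem_of_mem_erase hl))]
    simp only [mul_smul_comm, smul_mul_assoc, smul_smul, mul_assoc, List.length_cons]
    congr 1
    ring

theorem det_identity (hq : q * q' = 1) (h : IsQ q q' Set.univ Set.univ X)
    (h0 : ∀ i j, j < p → X i j = 0) (rs : List ℤ) (hrs : ∀ i ∈ rs, p < i)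
    (T : Finset ℤ) (hT : ∀ j ∈ T, p < j) :
    X p p ^ rs.length * OmL (-q') X (p :: rs) vac (insert p T) =
      OmL (-q') (Bm q' p X) rs vac T * X p p := by
  simp only [OmL]
  rw [Om_p_OmL hq h rs hrs, Pi.smul_apply, mul_smul_comm, x_pow_OmL hq h h0 rs hrs,
    OmL_Bm_insert q' X p rs T hT, smul_smul, ← mul_pow]
  have : -q * -q' = 1 := by linear_combination hq
  rw [this, one_pow, one_smul]

theorem det_identity' (hq : q * q' = 1) (h : IsQ q q' Set.univ Set.univ X)
    (h0 : ∀ i j, j < p → X i j = 0)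
    (hreg : ∀ y : A, X p p * y = 0 → y = 0) (i : ℤ) (rs : List ℤ)
    (hrs : ∀ t ∈ i :: rs, p < t)
    (T : Finset ℤ) (hT : ∀ j ∈ T, p < j) :
    OmL (-q') (Bm q' p X) (i :: rs) vac T =
      X p p ^ rs.length * OmL (-q') X (p :: i :: rs) vac (insert p T) ∧
    X p p * OmL (-q') X (p :: i :: rs) vac (insert p T) =
      OmL (-q') X (p :: i :: rs) vac (insert p T) * X p p := by
  have e := det_identity hq h h0 (i :: rs) hrs T hT
  have c := OmL_comm_of (-q') (Bm q' p X) (X p p) (fun i j => Bm_x hq h) (i :: rs) T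
  rw [← c, List.length_cons, pow_succ', mul_assoc] at e
  have e1 : OmL (-q') (Bm q' p X) (i :: rs) vac T =
      X p p ^ rs.length * OmL (-q') X (p :: i :: rs) vac (insert p T) := by
    rw [← sub_eq_zero]
    apply hreg
    rw [mul_sub, e, sub_self]
  refine ⟨e1, ?_⟩
  have hregp : ∀ (s : ℕ) (y : A), X p p ^ s * y = 0 → y = 0 := by
    intro s
    induction s with
    | zero => intro y hy; simpa using hy
    | succ s ih =>
      intro y hy
      rw [pow_succ, mul_assoc] at hy
      exact hreg _ (ih _ hy)
  rw [← sub_eq_zero]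
  apply hregp rs.length
  rw [mul_sub, ← mul_assoc, ← mul_assoc, ← pow_succ, pow_succ', mul_assoc, ← e1, c, sub_self]

end
end Det

section Univ

theorem qParam_mul_qInv (k : Type) [Field k] : qParam k * qInv k = 1 := by
  rw [qParam, qInv, ← LaurentPolynomial.T_add]
  simp

theorem qCoeff_eq (k : Type) [Field k] (l : ℕ) : qCoeff k l = (-qInv k) ^ l := by
  rw [qCoeff, qInv]
  conv_rhs => rw [neg_eq_neg_one_mul, mul_pow, LaurentPolynomial.T_pow]
  congr 2
  ring

variable (k : Type) [Field k] (m n : ℕ)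

/-- Row range as a set of integers. -/
def rowS (m n : ℕ) : Set ℤ := {i | i ∈ Finset.Icc (-(m : ℤ)) ((n : ℤ) - 1)}

/-- Column range as a set of integers. -/
def colS (m : ℕ) : Set ℤ := {j | j ∈ Finset.Icc (-(m : ℤ)) (-1 : ℤ)}

variable {k m n} in
theorem exists_liftQ {A : Type*} [Ring A] [Algebra (kq k) A] (X : ℤ → ℤ → A)
    (h : IsQ (qParam k) (qInv k) (rowS m n) (colS m) X) :
    ∃ φ : QMat k m n →ₐ[kq k] A, ∀ i j, φ (av k m n i j) = X i.1 j.1 := by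
  refine ⟨RingQuot.liftAlgHom (kq k) ⟨FreeAlgebra.lift (kq k) (fun p => X p.1.1 p.2.1), ?_⟩, ?_⟩
  · intro x y hxy
    induction hxy with
    | col i i' j hlt =>
      simp only [map_mul, map_smul, FreeAlgebra.lift_ι_apply]
      exact h.col _ i.2 _ i'.2 _ j.2 hlt
    | row i j j' hlt =>
      simp only [map_mul, map_smul, FreeAlgebra.lift_ι_apply]
      exact h.row _ i.2 _ j.2 _ j'.2 hlt
    | comm i i' j j' h1 h2 =>
      simp only [map_mul, FreeAlgebra.lift_ι_apply]
      exact h.comm _ i.2 _ i'.2 _ j.2 _ j'.2 h1 h2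
    | qcomm i i' j j' h1 h2 =>
      simp only [map_mul, map_sub, map_smul, FreeAlgebra.lift_ι_apply]
      rw [h.qcomm _ i.2 _ i'.2 _ j.2 _ j'.2 h1 h2, add_sub_cancel_left]
  · intro i j
    rw [av, qgen, RingQuot.liftAlgHom_mkAlgHom_apply, FreeAlgebra.lift_ι_apply]

theorem adjoin_av : Algebra.adjoin (kq k) {x : QMat k m n | ∃ i j, x = av k m n i j} = ⊤ := by
  rw [eq_top_iff]
  rintro x -
  obtain ⟨y, rfl⟩ := RingQuot.mkAlgHom_surjective (kq k) (QMRel k (RowI m n) (ColI m)) x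
  induction y using FreeAlgebra.induction with
  | grade0 r => rw [AlgHom.commutes]; exact Subalgebra.algebraMap_mem _ r
  | grade1 x => exact Algebra.subset_adjoin ⟨x.1, x.2, rfl⟩
  | mul a b ha hb => rw [map_mul]; exact mul_mem ha hb
  | add a b ha hb => rw [map_add]; exact add_mem ha hb

/-- The generators, extended by zero. -/
def avZ (i j : ℤ) : QMat k m n :=
  if h : i ∈ Finset.Icc (-(m : ℤ)) ((n : ℤ) - 1) ∧ j ∈ Finset.Icc (-(m : ℤ)) (-1 : ℤ) then
    av k m n ⟨i, h.1⟩ ⟨j, h.2⟩ else 0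

variable {m n} in
theorem avZ_of (i : RowI m n) (j : ColI m) : avZ k m n i.1 j.1 = av k m n i j := by
  rw [avZ, dif_pos ⟨i.2, j.2⟩]

theorem avZ_isQ : IsQ (qParam k) (qInv k) Set.univ Set.univ (avZ k m n) := by
  refine IsQ.restrict (R := rowS m n) (C := colS m) ⟨?_, ?_, ?_, ?_⟩ ?_
  · intro i hi k' hk j hj hik
    have e1 := avZ_of k ⟨i, hi⟩ ⟨j, hj⟩
    have e2 := avZ_of k ⟨k', hk⟩ ⟨j, hj⟩
    simp only at e1 e2
    rw [e1, e2]
    simp only [av, qgen]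
    rw [← map_mul, ← map_mul, ← map_smul]
    exact RingQuot.mkAlgHom_rel _ (QMRel.col _ _ _ hik)
  · intro i hi j hj l hl hjl
    have e1 := avZ_of k ⟨i, hi⟩ ⟨j, hj⟩
    have e2 := avZ_of k ⟨i, hi⟩ ⟨l, hl⟩
    simp only at e1 e2
    rw [e1, e2]
    simp only [av, qgen]
    rw [← map_mul, ← map_mul, ← map_smul]
    exact RingQuot.mkAlgHom_rel _ (QMRel.row _ _ _ hjl)
  · intro i hi k' hk j hj l hl hik hjl
    have e1 := avZ_of k ⟨i, hi⟩ ⟨j, hj⟩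
    have e2 := avZ_of k ⟨k', hk⟩ ⟨l, hl⟩
    simp only at e1 e2
    rw [e1, e2]
    simp only [av, qgen]
    rw [← map_mul, ← map_mul]
    exact RingQuot.mkAlgHom_rel _ (QMRel.comm _ _ _ _ hik hjl)
  · intro i hi k' hk j hj l hl hik hjl
    have e1 := avZ_of k ⟨i, hi⟩ ⟨j, hj⟩
    have e2 := avZ_of k ⟨k', hk⟩ ⟨l, hl⟩
    have e3 := avZ_of k ⟨k', hk⟩ ⟨j, hj⟩
    have e4 := avZ_of k ⟨i, hi⟩ ⟨l, hl⟩
    simp only at e1 e2 e3 e4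
    rw [e1, e2, e3, e4]
    have E := RingQuot.mkAlgHom_rel (kq k)
      (QMRel.qcomm (k := k) (⟨i, hi⟩ : RowI m n) ⟨k', hk⟩ (⟨j, hj⟩ : ColI m) ⟨l, hl⟩ hik hjl)
    simp only [map_mul, map_sub, map_smul] at E
    exact sub_eq_iff_eq_add'.1 E
  · intro i j hij
    exact dif_neg hij

theorem avZ_zero_col (i j : ℤ) (hj : j < -(m : ℤ)) : avZ k m n i j = 0 := by
  rw [avZ, dif_neg]
  simp only [Finset.mem_Icc]
  omega

theorem qMinor_eq (I : Finset ℤ) (hI : I.card = m)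
    (hsub : I ⊆ Finset.Icc (-(m : ℤ)) ((n : ℤ) - 1)) :
    qMinor k m n I hI hsub =
      OmL (-qInv k) (avZ k m n) I.sort vac (Finset.Icc (-(m : ℤ)) (-1 : ℤ)) := by
  have hc : StrictMono (fun t : Fin m => -(m : ℤ) + (t : ℕ)) := by
    intro a b hab
    have : (a : ℕ) < b := hab
    simp only
    omega
  have key := qdet_eq (-qInv k) (avZ k m n) m (I.orderEmbOfFin hI)
    (fun t : Fin m => -(m : ℤ) + (t : ℕ)) hc
  have e1 : List.ofFn (I.orderEmbOfFin hI) = I.sort := by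
    rw [List.ofFn_eq_map, Finset.listMap_orderEmbOfFin_finRange]
  have e2 : Finset.univ.image (fun t : Fin m => -(m : ℤ) + (t : ℕ)) =
      Finset.Icc (-(m : ℤ)) (-1 : ℤ) := by
    ext z
    simp only [Finset.mem_image, Finset.mem_univ, true_and, Finset.mem_Icc]
    constructor
    · rintro ⟨t, rfl⟩
      have := t.2
      omega
    · rintro ⟨h1, h2⟩
      refine ⟨⟨(z + m).toNat, by omega⟩, ?_⟩
      simp only
      omega
  rw [e1, e2] at key
  rw [← key, qMinor, qMinorG]
  refine Finset.sum_congr rfl fun σ _ => ?_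
  rw [qCoeff_eq]
  congr 3
  funext t
  exact (avZ_of k ⟨_, _⟩ ⟨_, _⟩).symm

end Univ

section Reg

theorem IsQ.mono {K A : Type*} [CommRing K] [Ring A] [Algebra K A] {q q' : K} {R C R' C' : Set ℤ}
    {X : ℤ → ℤ → A} (h : IsQ q q' R C X) (hR : R' ⊆ R) (hC : C' ⊆ C) : IsQ q q' R' C' X where
  col i hi k hk j hj := h.col i (hR hi) k (hR hk) j (hC hj)
  row i hi j hj l hl := h.row i (hR hi) j (hC hj) l (hC hl)
  comm i hi k hk j hj l hl := h.comm i (hR hi) k (hR hk) j (hC hj) l (hC hl)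
  qcomm i hi k hk j hj l hl := h.qcomm i (hR hi) k (hR hk) j (hC hj) l (hC hl)

section gen
variable {K A : Type*} [CommRing K] [Ring A] [Algebra K A]

/-- Left multiplication by constants on `A[X]`. -/
def Lop (K : Type*) {A : Type*} [CommRing K] [Ring A] [Algebra K A] (a : A) :
    Module.End K (Polynomial A) :=
  LinearMap.mulLeft K (Polynomial.C a)

theorem Lop_apply (a : A) (f : Polynomial A) : Lop K a f = Polynomial.C a * f := rfl

/-- The twisted shift on `A[X]`. -/
def Sop (σ : A →ₐ[K] A) : Module.End K (Polynomial A) :=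
  (LinearMap.mulRight K (Polynomial.X : Polynomial A)).comp (Polynomial.mapAlgHom σ).toLinearMap

theorem Sop_apply (σ : A →ₐ[K] A) (f : Polynomial A) :
    Sop σ f = f.map (σ : A →+* A) * Polynomial.X := rfl

theorem Lop_mul (a b : A) : Lop K a * Lop K b = Lop K (a * b) := by
  refine LinearMap.ext fun f => ?_
  simp only [Module.End.mul_apply, Lop_apply, map_mul, mul_assoc]

theorem Lop_add (a b : A) : Lop K (a + b) = Lop K a + Lop K b := by
  refine LinearMap.ext fun f => ?_
  simp only [LinearMap.add_apply, Lop_apply, map_add, add_mul]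

theorem Lop_smul (c : K) (a : A) : Lop K (c • a) = c • Lop K a := by
  refine LinearMap.ext fun f => ?_
  simp only [LinearMap.smul_apply, Lop_apply, ← Polynomial.smul_C, smul_mul_assoc]

theorem Lop_zero : Lop K (0 : A) = 0 := by
  refine LinearMap.ext fun f => ?_
  simp [Lop_apply]

theorem Sop_Lop (σ : A →ₐ[K] A) (a : A) : Sop σ * Lop K a = Lop K (σ a) * Sop σ := by
  refine LinearMap.ext fun f => ?_
  simp [Module.End.mul_apply, Lop_apply, Sop_apply, mul_assoc]

theorem reg_isQ {q q' : K} {X : ℤ → ℤ → A} (h : IsQ q q' Set.univ Set.univ X) {p : ℤ}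
    (h0 : ∀ i j, ¬ (p ≤ i ∧ p ≤ j) → X i j = 0) (σ : A →ₐ[K] A)
    (hσ : ∀ i j, σ (X i j) = ((if i = p then q' else 1) * (if j = p then q' else 1)) • X i j) :
    IsQ q q' Set.univ Set.univ
      (fun i j => Lop K (X i j) + if i = p ∧ j = p then Sop σ else 0) := by
  refine IsQ.restrict (R := Set.Ici p) (C := Set.Ici p) ⟨?_, ?_, ?_, ?_⟩ ?_
  · intro i hi k hk j hj hik
    have hkp : k ≠ p := fun e => absurd hik (not_lt.2 (e ▸ hi))
    have E := h.col i trivial k trivial j trivial hik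
    simp only [hkp, false_and, if_false, add_zero]
    rw [add_mul, mul_add, Lop_mul, Lop_mul, E, Lop_smul, smul_add]
    congr 1
    split_ifs with hc
    · obtain ⟨rfl, rfl⟩ := hc
      rw [Sop_Lop, hσ]
      simp [hkp, Lop_smul]
    · simp
  · intro i hi j hj l hl hjl
    have hkp : l ≠ p := fun e => absurd hjl (not_lt.2 (e ▸ hj))
    have E := h.row i trivial j trivial l trivial hjl
    simp only [hkp, and_false, if_false, add_zero]
    rw [add_mul, mul_add, Lop_mul, Lop_mul, E, Lop_smul, smul_add]
    congr 1
    split_ifs with hc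
    · obtain ⟨rfl, rfl⟩ := hc
      rw [Sop_Lop, hσ]
      simp [hkp, Lop_smul]
    · simp
  · intro i hi k hk j hj l hl hik hjl
    have hkp : k ≠ p := fun e => absurd hik (not_lt.2 (e ▸ hi))
    have hjp : j ≠ p := fun e => absurd hjl (not_lt.2 (e ▸ hl))
    have E := h.comm i trivial k trivial j trivial l trivial hik hjl
    simp only [hkp, hjp, and_false, false_and, if_false, add_zero]
    rw [Lop_mul, Lop_mul, E]
  · intro i hi k hk j hj l hl hik hjl
    have hkp : k ≠ p := fun e => absurd hik (not_lt.2 (e ▸ hi))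
    have hlp : l ≠ p := fun e => absurd hjl (not_lt.2 (e ▸ hj))
    have E := h.qcomm i trivial k trivial j trivial l trivial hik hjl
    simp only [hkp, hlp, and_false, false_and, if_false, add_zero]
    rw [add_mul, mul_add, Lop_mul, Lop_mul, Lop_mul, E, Lop_add, Lop_smul]
    have : (if i = p ∧ j = p then Sop σ else 0) * Lop K (X k l) =
        Lop K (X k l) * (if i = p ∧ j = p then Sop σ else 0) := by
      split_ifs with hc
      · rw [Sop_Lop, hσ]
        simp [hkp, hlp]
      · simp
    rw [this]
    abel
  · intro i j hij
    have : ¬ (i = p ∧ j = p) := by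
      rintro ⟨rfl, rfl⟩
      exact hij ⟨Set.self_mem_Ici, Set.self_mem_Ici⟩
    simp only [if_neg this, add_zero]
    rw [h0 i j hij, Lop_zero]

theorem reg_top (σ : A →ₐ[K] A) (hσ : Function.Injective σ) (x : A) (z : Polynomial A)
    (hz : (Lop K x + Sop σ) z = 0) : z = 0 := by
  rw [LinearMap.add_apply, Lop_apply, Sop_apply] at hz
  have := congrArg (fun f => Polynomial.coeff f (z.natDegree + 1)) hz
  simp only [Polynomial.coeff_add, Polynomial.coeff_C_mul, Polynomial.coeff_mul_X,
    Polynomial.coeff_map, Polynomial.coeff_zero] at this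
  rw [Polynomial.coeff_eq_zero_of_natDegree_lt (Nat.lt_succ_self _), mul_zero, zero_add] at this
  have h2 : σ (z.coeff z.natDegree) = 0 := this
  rw [← Polynomial.leadingCoeff_eq_zero]
  exact hσ (by rw [map_zero]; exact h2)

end gen

variable (k : Type) [Field k] (m n : ℕ)

variable {k m n} in
theorem hom_ext_av {A : Type*} [Semiring A] [Algebra (kq k) A] (φ ψ : QMat k m n →ₐ[kq k] A)
    (h : ∀ i j, φ (av k m n i j) = ψ (av k m n i j)) : φ = ψ := by
  refine AlgHom.ext_of_adjoin_eq_top (adjoin_av k m n) ?_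
  rintro x ⟨i, j, rfl⟩
  exact h i j

variable {k m n} in
theorem map_avZ_scale (φ : QMat k m n →ₐ[kq k] QMat k m n) (c : ℤ → ℤ → kq k)
    (h : ∀ i j, φ (av k m n i j) = c i.1 j.1 • avZ k m n i.1 j.1) (i j : ℤ) :
    φ (avZ k m n i j) = c i j • avZ k m n i j := by
  by_cases hij : i ∈ Finset.Icc (-(m : ℤ)) ((n : ℤ) - 1) ∧ j ∈ Finset.Icc (-(m : ℤ)) (-1 : ℤ)
  · have e := avZ_of k ⟨i, hij.1⟩ ⟨j, hij.2⟩
    simp only at e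
    conv_lhs => rw [e]
    exact h _ _
  · rw [avZ, dif_neg hij, map_zero, smul_zero]

theorem regular (hm : 0 < m) (y : QMat k m n)
    (hy : avZ k m n (-(m : ℤ)) (-(m : ℤ)) * y = 0) : y = 0 := by
  set p : ℤ := -(m : ℤ) with hp
  have hIsQ := avZ_isQ k m n
  have hsc : ∀ c : kq k, ∃ φ : QMat k m n →ₐ[kq k] QMat k m n, ∀ i j, φ (avZ k m n i j) =
      ((if i = p then c else 1) * (if j = p then c else 1)) • avZ k m n i j := by
    intro c
    obtain ⟨φ, hφ⟩ := exists_liftQ (m := m) (n := n) _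
      ((hIsQ.scale (fun i => if i = p then c else 1) (fun i => if i = p then c else 1)).mono
        (Set.subset_univ (rowS m n)) (Set.subset_univ (colS m)))
    exact ⟨φ, map_avZ_scale φ _ hφ⟩
  obtain ⟨σ, hσ⟩ := hsc (qInv k)
  obtain ⟨τ, hτ⟩ := hsc (qParam k)
  have hinj : Function.Injective σ := by
    have hc : τ.comp σ = AlgHom.id (kq k) _ := by
      apply hom_ext_av
      intro i j
      rw [← avZ_of, AlgHom.comp_apply, hσ, map_smul, hτ, smul_smul]
      have hq := qParam_mul_qInv k
      have : ((if (i : ℤ) = p then qInv k else 1) * if (j : ℤ) = p then qInv k else 1) *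
          ((if (i : ℤ) = p then qParam k else 1) * if (j : ℤ) = p then qParam k else 1) = 1 := by
        split_ifs
        · linear_combination (1 + qParam k * qInv k) * hq
        · linear_combination hq
        · linear_combination hq
        · simp
      rw [this, one_smul]
      rfl
    intro a b hab
    have ha := DFunLike.congr_fun hc a
    have hb := DFunLike.congr_fun hc b
    simp only [AlgHom.comp_apply, AlgHom.id_apply] at ha hb
    rw [← ha, ← hb, hab]
  have hQ := reg_isQ hIsQ (p := p) (fun i j hij => by
    rw [avZ, dif_neg]
    simp only [Finset.mem_Icc]
    omega) σ hσ
  obtain ⟨θ, hθ⟩ := exists_liftQ (m := m) (n := n) _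
    (hQ.mono (Set.subset_univ (rowS m n)) (Set.subset_univ (colS m)))
  have hcoeff : ∀ (y : QMat k m n) (f : Polynomial (QMat k m n)),
      (θ y f).coeff 0 = y * f.coeff 0 := by
    intro y
    have hy : y ∈ Algebra.adjoin (kq k) {x : QMat k m n | ∃ i j, x = av k m n i j} := by
      rw [adjoin_av]; trivial
    induction hy using Algebra.adjoin_induction with
    | mem x hx =>
      obtain ⟨i, j, rfl⟩ := hx
      intro f
      rw [hθ, LinearMap.add_apply, Lop_apply, Polynomial.coeff_add, Polynomial.coeff_C_mul,
        avZ_of]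
      split_ifs
      · rw [Sop_apply, Polynomial.coeff_mul_X_zero, add_zero]
      · simp
    | algebraMap r =>
      intro f
      rw [AlgHom.commutes, Module.algebraMap_end_apply, Polynomial.coeff_smul,
        Algebra.smul_def]
    | add x y _ _ hx hy =>
      intro f
      rw [map_add, LinearMap.add_apply, Polynomial.coeff_add, hx, hy, add_mul]
    | mul x y _ _ hx hy =>
      intro f
      rw [map_mul, Module.End.mul_apply, hx, hy, mul_assoc]
  have hx : θ (avZ k m n p p) = Lop (kq k) (avZ k m n p p) + Sop σ := by
    have e := avZ_of k (m := m) (n := n) ⟨p, by simp only [Finset.mem_Icc]; omega⟩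
      ⟨p, by simp only [Finset.mem_Icc]; omega⟩
    simp only at e
    conv_lhs => rw [e]
    rw [hθ]
    simp
  have hz : θ y 1 = 0 := by
    apply reg_top σ hinj (avZ k m n p p)
    rw [← hx, ← Module.End.mul_apply, ← map_mul, hy, map_zero]
    rfl
  have := hcoeff y 1
  rw [hz] at this
  simpa using this.symm

end Reg

section Step

section gen
variable {K A : Type*} [CommRing K] [Ring A] [Algebra K A]

theorem IsQ.map {A' : Type*} [Ring A'] [Algebra K A'] (φ : A →ₐ[K] A') {q q' : K} {R C : Set ℤ}
    {X : ℤ → ℤ → A} (h : IsQ q q' R C X) : IsQ q q' R C (fun i j => φ (X i j)) where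
  col i hi k hk j hj hik := by
    rw [← map_mul, h.col i hi k hk j hj hik, map_smul, map_mul]
  row i hi j hj l hl hjl := by
    rw [← map_mul, h.row i hi j hj l hl hjl, map_smul, map_mul]
  comm i hi k hk j hj l hl hik hjl := by
    rw [← map_mul, h.comm i hi k hk j hj l hl hik hjl, map_mul]
  qcomm i hi k hk j hj l hl hik hjl := by
    rw [← map_mul, h.qcomm i hi k hk j hj l hl hik hjl, map_add, map_smul, map_mul, map_mul]

theorem IsQ.of_map {A' : Type*} [Ring A'] [Algebra K A'] (φ : A →ₐ[K] A')
    (hφ : Function.Injective φ) {q q' : K} {R C : Set ℤ}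
    {X : ℤ → ℤ → A} (h : IsQ q q' R C (fun i j => φ (X i j))) : IsQ q q' R C X where
  col i hi k hk j hj hik := hφ (by simpa using h.col i hi k hk j hj hik)
  row i hi j hj l hl hjl := hφ (by simpa using h.row i hi j hj l hl hjl)
  comm i hi k hk j hj l hl hik hjl := hφ (by simpa using h.comm i hi k hk j hj l hl hik hjl)
  qcomm i hi k hk j hj l hl hik hjl := hφ (by simpa using h.qcomm i hi k hk j hj l hl hik hjl)

theorem IsQ.mul_central {q q' : K} {R C : Set ℤ} {X : ℤ → ℤ → A} (h : IsQ q q' R C X) (c : A)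
    (hc : ∀ a, Commute c a) : IsQ q q' R C (fun i j => X i j * c) := by
  have e : ∀ a b : A, a * c * (b * c) = a * b * (c * c) := by
    intro a b
    rw [mul_assoc, ← mul_assoc c, (hc b).eq]
    simp only [mul_assoc]
  constructor
  · intro i hi k hk j hj hik
    rw [e, e, h.col i hi k hk j hj hik, smul_mul_assoc]
  · intro i hi j hj l hl hjl
    rw [e, e, h.row i hi j hj l hl hjl, smul_mul_assoc]
  · intro i hi k hk j hj l hl hik hjl
    rw [e, e, h.comm i hi k hk j hj l hl hik hjl]
  · intro i hi k hk j hj l hl hik hjl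
    rw [e, e, e, h.qcomm i hi k hk j hj l hl hik hjl, add_mul, smul_mul_assoc]

/-- The endomorphism `T ↦ y T^(e+1)` of `Z[T]` is injective for `y` central regular. -/
theorem exists_theta {Z : Type*} [Ring Z] [Algebra K Z] (y : Z) (hy : ∀ z, Commute z y)
    (hreg : ∀ z, z * y = 0 → z = 0) (e : ℕ) :
    ∃ Θ : Polynomial Z →ₐ[K] Polynomial Z, Function.Injective Θ ∧
      ∀ z, Θ (Polynomial.C z * Polynomial.X) =
        Polynomial.C (z * y) * Polynomial.X ^ (e + 1) := by
  have hcomm : ∀ a : Z, Commute ((Polynomial.CAlgHom : Z →ₐ[K] Polynomial Z) a)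
      (Polynomial.C y * Polynomial.X ^ (e + 1)) := by
    intro a
    refine Commute.mul_right ?_ ?_
    · exact (hy a).map (Polynomial.C : Z →+* Polynomial Z)
    · exact (Polynomial.commute_X_pow _ _).symm
  let Θ : Polynomial Z →ₐ[K] Polynomial Z :=
    Polynomial.eval₂AlgHom (Polynomial.CAlgHom : Z →ₐ[K] Polynomial Z)
      (Polynomial.C y * Polynomial.X ^ (e + 1)) hcomm
  have hΘ : ∀ f, Θ f = f.eval₂ Polynomial.C (Polynomial.C y * Polynomial.X ^ (e + 1)) :=
    fun f => rfl
  have hmon : ∀ (i : ℕ), (Polynomial.C y * Polynomial.X ^ (e + 1)) ^ i =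
      Polynomial.C (y ^ i) * Polynomial.X ^ ((e + 1) * i) := by
    intro i
    rw [((Polynomial.commute_X_pow (Polynomial.C y) (e + 1)).symm).mul_pow, ← pow_mul, map_pow]
  have hcoeff : ∀ (f : Polynomial Z) (i : ℕ), (Θ f).coeff ((e + 1) * i) = f.coeff i * y ^ i := by
    intro f i
    rw [hΘ, Polynomial.eval₂_eq_sum, Polynomial.sum, Polynomial.finset_sum_coeff,
      Finset.sum_eq_single i]
    · rw [hmon, ← mul_assoc, ← map_mul, Polynomial.coeff_C_mul_X_pow, if_pos rfl]
    · intro b _ hb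
      rw [hmon, ← mul_assoc, ← map_mul, Polynomial.coeff_C_mul_X_pow, if_neg]
      intro h
      exact hb (Nat.eq_of_mul_eq_mul_left (Nat.succ_pos e) h).symm
    · intro hi
      rw [Polynomial.notMem_support_iff.1 hi]
      simp
  have hregp : ∀ (s : ℕ) (z : Z), z * y ^ s = 0 → z = 0 := by
    intro s
    induction s with
    | zero => intro z hz; simpa using hz
    | succ s ih =>
      intro z hz
      rw [pow_succ', ← mul_assoc] at hz
      exact hreg _ (ih _ hz)
  refine ⟨Θ, ?_, ?_⟩
  · rw [injective_iff_map_eq_zero]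
    intro f hf
    ext i
    rw [Polynomial.coeff_zero]
    apply hregp i
    rw [← hcoeff, hf, Polynomial.coeff_zero]
  · intro z
    rw [hΘ, Polynomial.eval₂_mul_X, Polynomial.eval₂_C, ← mul_assoc, ← map_mul]

theorem step_gen {B ι : Type*} [Ring B] [Algebra K B] (d : ι → B) (D : ι → A) (x : A)
    (hreg : ∀ z, x * z = 0 → z = 0) (hD : ∀ i, D i ∈ Subalgebra.centralizer K {x}) (e : ℕ)
    (P : B →ₐ[K] Polynomial (Subalgebra.centralizer K {x}))
    (hP : ∀ i, ∃ w : Subalgebra.centralizer K {x}, (w : A) = x ^ e * D i ∧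
      P (d i) = Polynomial.C w * Polynomial.X ^ (e + 1)) :
    ∃ r : Algebra.adjoin K (Set.range d) →ₐ[K] A,
      (∀ y, r y ∈ Algebra.adjoin K (Set.range D)) ∧
      ∀ i, r ⟨d i, Algebra.subset_adjoin ⟨i, rfl⟩⟩ = D i := by
  have hxZ : x ∈ Subalgebra.centralizer K {x} := by
    rw [Subalgebra.mem_centralizer_iff]
    rintro g rfl
    rfl
  have hZ : ∀ z : Subalgebra.centralizer K {x}, x * (z : A) = z * x := fun z =>
    (Subalgebra.mem_centralizer_iff K).1 z.2 x rfl
  have hregp : ∀ (s : ℕ) (y : A), x ^ s * y = 0 → y = 0 := by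
    intro s
    induction s with
    | zero => intro y hy; simpa using hy
    | succ s ih =>
      intro y hy
      rw [pow_succ, mul_assoc] at hy
      exact hreg _ (ih _ hy)
  let y : Subalgebra.centralizer K {x} := ⟨x, hxZ⟩ ^ e
  have hyc : ∀ z : Subalgebra.centralizer K {x}, Commute z y := by
    intro z
    apply Commute.pow_right
    exact Subtype.ext (hZ z).symm
  have hyA : (y : A) = x ^ e := by simp [y]
  obtain ⟨Θ, hΘ, hΘX⟩ := exists_theta (K := K) y hyc (by
    intro z hz
    rw [(hyc z).eq] at hz
    have := congrArg (Subtype.val) hz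
    rw [MulMemClass.coe_mul, hyA] at this
    exact Subtype.ext (hregp e _ this)) e
  have hPd : ∀ i, P (d i) = Θ (Polynomial.C ⟨D i, hD i⟩ * Polynomial.X) := by
    intro i
    obtain ⟨w, hw, h⟩ := hP i
    rw [h, hΘX]
    congr 2
    rw [(hyc _).eq]
    apply Subtype.ext
    rw [hw, MulMemClass.coe_mul, hyA]
  have hle : Algebra.adjoin K (Set.range d) ≤ Θ.range.comap P := by
    rw [Algebra.adjoin_le_iff]
    rintro _ ⟨i, rfl⟩
    exact ⟨_, (hPd i).symm⟩
  let P1 : Algebra.adjoin K (Set.range d) →ₐ[K] Θ.range :=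
    (P.comp (Algebra.adjoin K (Set.range d)).val).codRestrict Θ.range (fun z => hle z.2)
  let ev : Polynomial (Subalgebra.centralizer K {x}) →ₐ[K] A :=
    Polynomial.eval₂AlgHom (Subalgebra.centralizer K {x}).val 1 (fun _ => Commute.one_right _)
  let r : Algebra.adjoin K (Set.range d) →ₐ[K] A :=
    (ev.comp ((AlgEquiv.ofInjective Θ hΘ).symm : Θ.range →ₐ[K] _)).comp P1
  have hr : ∀ i, r ⟨d i, Algebra.subset_adjoin ⟨i, rfl⟩⟩ = D i := by
    intro i
    have h1 : (AlgEquiv.ofInjective Θ hΘ).symm (P1 ⟨d i, Algebra.subset_adjoin ⟨i, rfl⟩⟩) =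
        Polynomial.C ⟨D i, hD i⟩ * Polynomial.X := by
      rw [AlgEquiv.symm_apply_eq]
      apply Subtype.ext
      exact hPd i
    change ev ((AlgEquiv.ofInjective Θ hΘ).symm (P1 ⟨d i, Algebra.subset_adjoin ⟨i, rfl⟩⟩)) = D i
    rw [h1]
    change Polynomial.eval₂ _ _ _ = _
    rw [Polynomial.eval₂_mul_X, Polynomial.eval₂_C, mul_one]
    rfl
  refine ⟨r, ?_, hr⟩
  rintro ⟨z, hz⟩
  induction hz using Algebra.adjoin_induction with
  | mem z hz =>
    obtain ⟨i, rfl⟩ := hz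
    rw [hr]
    exact Algebra.subset_adjoin ⟨i, rfl⟩
  | algebraMap c =>
    have : r ⟨algebraMap K B c, Subalgebra.algebraMap_mem _ c⟩ = algebraMap K A c :=
      r.commutes c
    rw [this]
    exact Subalgebra.algebraMap_mem _ c
  | add a b ha hb h1 h2 =>
    have : r ⟨a + b, add_mem ha hb⟩ = r ⟨a, ha⟩ + r ⟨b, hb⟩ := map_add r ⟨a, ha⟩ ⟨b, hb⟩
    rw [this]
    exact add_mem h1 h2
  | mul a b ha hb h1 h2 =>
    have : r ⟨a * b, mul_mem ha hb⟩ = r ⟨a, ha⟩ * r ⟨b, hb⟩ := map_mul r ⟨a, ha⟩ ⟨b, hb⟩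
    rw [this]
    exact mul_mem h1 h2

end gen
end Step

section Concrete
variable (k : Type) [Field k] (m n : ℕ)

variable {k} in
theorem exists_P {A : Type*} [Ring A] [Algebra (kq k) A] (X : ℤ → ℤ → A)
    (hX : IsQ (qParam k) (qInv k) Set.univ Set.univ X) (p : ℤ) :
    ∃ P : QMat k m n →ₐ[kq k] Polynomial (Subalgebra.centralizer (kq k) {X p p}),
      ∀ (I : Finset ℤ), I.card = m → I ⊆ Finset.Icc (-(m : ℤ)) ((n : ℤ) - 1) →
        ∃ w : Subalgebra.centralizer (kq k) {X p p},
        (w : A) = OmL (-qInv k) (Bm (qInv k) p X) I.sort vac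
            (Finset.Icc (-(m : ℤ)) (-1 : ℤ)) ∧
        P (OmL (-qInv k) (avZ k m n) I.sort vac (Finset.Icc (-(m : ℤ)) (-1 : ℤ))) =
          Polynomial.C w * Polynomial.X ^ m := by
  have hq := qParam_mul_qInv k
  have hB := Bm_isQ hq hX (p := p)
  have hmem : ∀ i j, Bm (qInv k) p X i j ∈ Subalgebra.centralizer (kq k) {X p p} := by
    intro i j
    rw [Subalgebra.mem_centralizer_iff]
    intro g hg
    rw [Set.mem_singleton_iff.1 hg]
    exact Bm_x hq hX
  let b : ℤ → ℤ → Subalgebra.centralizer (kq k) {X p p} :=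
    fun i j => ⟨Bm (qInv k) p X i j, hmem i j⟩
  have hb : IsQ (qParam k) (qInv k) Set.univ Set.univ b :=
    IsQ.of_map (X := b)
      (Subalgebra.centralizer (kq k) {X p p}).val Subtype.val_injective hB
  have hXc : ∀ a : Polynomial (Subalgebra.centralizer (kq k) {X p p}),
      Commute Polynomial.X a := fun a => Polynomial.commute_X a
  have hC := (hb.map (Polynomial.CAlgHom (R := kq k))).mul_central Polynomial.X hXc
  obtain ⟨P, hP⟩ := exists_liftQ (m := m) (n := n) _
    (hC.mono (Set.subset_univ (rowS m n)) (Set.subset_univ (colS m)))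
  refine ⟨P, ?_⟩
  intro I hI hsub
  refine ⟨OmL (-qInv k) b I.sort vac (Finset.Icc (-(m : ℤ)) (-1 : ℤ)), ?_, ?_⟩
  · exact OmL_map (Subalgebra.centralizer (kq k) {X p p}).val _ _ _ _
  · have e1 := OmL_map P (-qInv k) (avZ k m n) I.sort (Finset.Icc (-(m : ℤ)) (-1 : ℤ))
    have e2 := OmL_scale (-qInv k) (fun i j => (Polynomial.CAlgHom (R := kq k)) (b i j))
      Polynomial.X hXc I.sort (Finset.Icc (-(m : ℤ)) (-1 : ℤ))
    rw [← OmL_map, Finset.length_sort, hI] at e2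
    refine e1.trans (Eq.trans ?_ e2)
    apply OmL_congr
    intro i hi j hj
    have hi' : i ∈ Finset.Icc (-(m : ℤ)) ((n : ℤ) - 1) := hsub (by simpa using hi)
    have e := avZ_of k ⟨i, hi'⟩ ⟨j, hj⟩
    simp only at e
    rw [e, hP]

theorem QDeltaSub_eq : QDeltaSub k m n = Algebra.adjoin (kq k)
    (Set.range fun I : {I : Finset ℤ // I.card = m ∧ I ⊆ Finset.Icc (-(m : ℤ)) ((n : ℤ) - 1)} =>
      qMinor k m n I.1 I.2.1 I.2.2) := by
  rw [QDeltaSub]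
  congr 1
  ext x
  constructor
  · rintro ⟨I, hI, hsub, rfl⟩
    exact ⟨⟨I, hI, hsub⟩, rfl⟩
  · rintro ⟨I, rfl⟩
    exact ⟨I.1, I.2.1, I.2.2, rfl⟩

theorem one_step (hm : 0 < m) :
    ∃ r : ↥(QDeltaSub k m n) →ₐ[kq k] ↥(QDeltaSub k (m + 1) n),
      ∀ (I : Finset ℤ) (hI : I.card = m) (hsub : I ⊆ Finset.Icc (-(m : ℤ)) ((n : ℤ) - 1))
      (hmem : qMinor k m n I hI hsub ∈ QDeltaSub k m n)
      (hcard : (insert (-((m + 1 : ℕ) : ℤ)) I).card = m + 1)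
      (hsub' : insert (-((m + 1 : ℕ) : ℤ)) I ⊆
        Finset.Icc (-((m + 1 : ℕ) : ℤ)) ((n : ℤ) - 1)),
      (r ⟨qMinor k m n I hI hsub, hmem⟩ : QMat k (m + 1) n) =
        qMinor k (m + 1) n (insert (-((m + 1 : ℕ) : ℤ)) I) hcard hsub' := by
  obtain ⟨P, hP⟩ := exists_P m n (avZ k (m + 1) n) (avZ_isQ k (m + 1) n) (-((m + 1 : ℕ) : ℤ))
  set p : ℤ := -((m + 1 : ℕ) : ℤ) with hp
  have hq := qParam_mul_qInv k
  have hX := avZ_isQ k (m + 1) n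
  have hreg : ∀ y, avZ k (m + 1) n p p * y = 0 → y = 0 := regular k (m + 1) n (Nat.succ_pos m)
  have h0 : ∀ i j, j < p → avZ k (m + 1) n i j = 0 := avZ_zero_col k (m + 1) n
  have hIcc : Finset.Icc (-((m + 1 : ℕ) : ℤ)) (-1 : ℤ) =
      insert p (Finset.Icc (-(m : ℤ)) (-1 : ℤ)) := by
    ext z
    simp only [Finset.mem_Icc, Finset.mem_insert]
    omega
  -- the target minors
  have hins : ∀ I : Finset ℤ, I.card = m → I ⊆ Finset.Icc (-(m : ℤ)) ((n : ℤ) - 1) →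
      (∀ i ∈ I, p < i) ∧ p ∉ I ∧ (insert p I).card = m + 1 ∧
        insert p I ⊆ Finset.Icc (-((m + 1 : ℕ) : ℤ)) ((n : ℤ) - 1) := by
    intro I hI hsub
    have h1 : ∀ i ∈ I, p < i := by
      intro i hi
      have := Finset.mem_Icc.1 (hsub hi)
      omega
    have h2 : p ∉ I := fun h => lt_irrefl _ (h1 p h)
    refine ⟨h1, h2, by rw [Finset.card_insert_of_notMem h2, hI], ?_⟩
    intro z hz
    rcases Finset.mem_insert.1 hz with rfl | hz
    · simp only [Finset.mem_Icc]; omega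
    · have := Finset.mem_Icc.1 (hsub hz)
      simp only [Finset.mem_Icc]; omega
  have hDet : ∀ (I : Finset ℤ) (hI : I.card = m)
      (hsub : I ⊆ Finset.Icc (-(m : ℤ)) ((n : ℤ) - 1)),
      OmL (-qInv k) (Bm (qInv k) p (avZ k (m + 1) n)) I.sort vac
          (Finset.Icc (-(m : ℤ)) (-1 : ℤ)) =
        avZ k (m + 1) n p p ^ (m - 1) * qMinor k (m + 1) n (insert p I)
          (hins I hI hsub).2.2.1 (hins I hI hsub).2.2.2 ∧
      avZ k (m + 1) n p p * qMinor k (m + 1) n (insert p I)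
          (hins I hI hsub).2.2.1 (hins I hI hsub).2.2.2 =
        qMinor k (m + 1) n (insert p I)
          (hins I hI hsub).2.2.1 (hins I hI hsub).2.2.2 * avZ k (m + 1) n p p := by
    intro I hI hsub
    obtain ⟨h1, h2, h3, h4⟩ := hins I hI hsub
    have hmin : qMinor k (m + 1) n (insert p I) h3 h4 = OmL (-qInv k) (avZ k (m + 1) n)
        (p :: I.sort) vac (insert p (Finset.Icc (-(m : ℤ)) (-1 : ℤ))) := by
      rw [qMinor_eq, Finset.sort_insert _ (fun b hb => (h1 b hb).le) h2]
      exact congrArg (OmL (-qInv k) (avZ k (m + 1) n) (p :: I.sort) vac) hIcc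
    rw [hmin]
    have hlen : I.sort.length = m := by rw [Finset.length_sort, hI]
    have hlt : ∀ t ∈ I.sort, p < t := fun t ht => h1 t (by simpa using ht)
    clear hmin
    generalize I.sort = L at hlen hlt ⊢
    cases L with
    | nil => simp at hlen; omega
    | cons i rs =>
      have hl : rs.length = m - 1 := by simp at hlen; omega
      have := det_identity' hq hX h0 hreg i rs hlt (Finset.Icc (-(m : ℤ)) (-1 : ℤ))
        (fun j hj => by have := Finset.mem_Icc.1 hj; omega)
      rw [hl] at this
      exact this
  obtain ⟨r, hr1, hr2⟩ := step_gen (K := kq k)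
    (fun I : {I : Finset ℤ // I.card = m ∧ I ⊆ Finset.Icc (-(m : ℤ)) ((n : ℤ) - 1)} =>
      qMinor k m n I.1 I.2.1 I.2.2)
    (fun I => qMinor k (m + 1) n (insert p I.1) (hins I.1 I.2.1 I.2.2).2.2.1
      (hins I.1 I.2.1 I.2.2).2.2.2) (avZ k (m + 1) n p p) hreg
    (fun I => by
      rw [Subalgebra.mem_centralizer_iff]
      intro g hg
      rw [Set.mem_singleton_iff.1 hg]
      exact (hDet I.1 I.2.1 I.2.2).2) (m - 1) P
    (fun I => by
      obtain ⟨w, hw1, hw2⟩ := hP I.1 I.2.1 I.2.2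
      refine ⟨w, hw1.trans (hDet I.1 I.2.1 I.2.2).1, ?_⟩
      rw [qMinor_eq, Nat.sub_add_cancel hm]
      exact hw2)
  have hle : Algebra.adjoin (kq k) (Set.range
      (fun I : {I : Finset ℤ // I.card = m ∧ I ⊆ Finset.Icc (-(m : ℤ)) ((n : ℤ) - 1)} =>
        qMinor k (m + 1) n (insert p I.1) (hins I.1 I.2.1 I.2.2).2.2.1
      (hins I.1 I.2.1 I.2.2).2.2.2)) ≤ QDeltaSub k (m + 1) n := by
    apply Algebra.adjoin_mono
    rintro _ ⟨I, rfl⟩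
    exact ⟨_, _, _, rfl⟩
  refine ⟨(r.comp (Subalgebra.inclusion (QDeltaSub_eq k m n).le)).codRestrict
    (QDeltaSub k (m + 1) n) (fun y => hle (hr1 _)), ?_⟩
  intro I hI hsub hmem hcard hsub'
  exact hr2 ⟨I, hI, hsub⟩

end Concrete

section Final
variable (k : Type) [Field k] (m n : ℕ)

theorem qMinor_mem (I : Finset ℤ) (hI : I.card = m)
    (hsub : I ⊆ Finset.Icc (-(m : ℤ)) ((n : ℤ) - 1)) :
    qMinor k m n I hI hsub ∈ QDeltaSub k m n :=
  Algebra.subset_adjoin ⟨I, hI, hsub, rfl⟩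

theorem qMinor_congr (I J : Finset ℤ) (h : I = J) (hI : I.card = m)
    (hsub : I ⊆ Finset.Icc (-(m : ℤ)) ((n : ℤ) - 1)) (hJ : J.card = m)
    (hsubJ : J ⊆ Finset.Icc (-(m : ℤ)) ((n : ℤ) - 1)) :
    qMinor k m n I hI hsub = qMinor k m n J hJ hsubJ := by
  subst h
  rfl

variable {k m n} in
theorem hom_ext_QDelta {A : Type*} [Semiring A] [Algebra (kq k) A]
    (φ ψ : ↥(QDeltaSub k m n) →ₐ[kq k] A)
    (h : ∀ I hI hsub, φ ⟨qMinor k m n I hI hsub, qMinor_mem k m n I hI hsub⟩ =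
      ψ ⟨qMinor k m n I hI hsub, qMinor_mem k m n I hI hsub⟩) : φ = ψ := by
  refine AlgHom.adjoin_ext ?_
  rintro x ⟨I, hI, hsub, rfl⟩
  exact h I hI hsub

variable {k m n} in
/-- A homomorphism from the algebra of quantum matrices applied to a minor. -/
theorem map_qMinor {A : Type*} [Ring A] [Algebra (kq k) A] (φ : QMat k m n →ₐ[kq k] A) (I : Finset ℤ)
    (hI : I.card = m) (hsub : I ⊆ Finset.Icc (-(m : ℤ)) ((n : ℤ) - 1)) (Y : ℤ → ℤ → A)
    (hY : ∀ i j, φ (av k m n i j) = Y i.1 j.1) :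
    φ (qMinor k m n I hI hsub) =
      OmL (-qInv k) Y I.sort vac (Finset.Icc (-(m : ℤ)) (-1 : ℤ)) := by
  rw [qMinor_eq]
  have e1 := OmL_map (K := kq k) (A := QMat k m n) (A' := A) φ (-qInv k) (avZ k m n) I.sort
    (Finset.Icc (-(m : ℤ)) (-1 : ℤ))
  refine e1.trans ?_
  apply OmL_congr
  intro i hi j hj
  have hi' : i ∈ Finset.Icc (-(m : ℤ)) ((n : ℤ) - 1) := hsub (by simpa using hi)
  have e := avZ_of k ⟨i, hi'⟩ ⟨j, hj⟩
  simp only at e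
  rw [e, hY]

theorem extend_n (n' : ℕ) (hnn : n ≤ n') :
    ∃ r : ↥(QDeltaSub k m n) →ₐ[kq k] ↥(QDeltaSub k m n'),
      ∀ (I : Finset ℤ) (hI : I.card = m) (hsub : I ⊆ Finset.Icc (-(m : ℤ)) ((n : ℤ) - 1))
      (hmem : qMinor k m n I hI hsub ∈ QDeltaSub k m n)
      (hsub' : I ⊆ Finset.Icc (-(m : ℤ)) ((n' : ℤ) - 1)),
      (r ⟨qMinor k m n I hI hsub, hmem⟩ : QMat k m n') = qMinor k m n' I hI hsub' := by
  obtain ⟨φ, hφ⟩ := exists_liftQ (m := m) (n := n) _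
    ((avZ_isQ k m n').mono (Set.subset_univ (rowS m n)) (Set.subset_univ (colS m)))
  have key : ∀ (I : Finset ℤ) (hI : I.card = m) (hsub : I ⊆ Finset.Icc (-(m : ℤ)) ((n : ℤ) - 1))
      (hsub' : I ⊆ Finset.Icc (-(m : ℤ)) ((n' : ℤ) - 1)),
      φ (qMinor k m n I hI hsub) = qMinor k m n' I hI hsub' := by
    intro I hI hsub hsub'
    rw [map_qMinor (A := QMat k m n') φ I hI hsub _ hφ, qMinor_eq]
  have hle : QDeltaSub k m n ≤ (QDeltaSub k m n').comap φ := by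
    refine Algebra.adjoin_le ?_
    rintro _ ⟨I, hI, hsub, rfl⟩
    have hsub' : I ⊆ Finset.Icc (-(m : ℤ)) ((n' : ℤ) - 1) := by
      intro z hz
      have := Finset.mem_Icc.1 (hsub hz)
      rw [Finset.mem_Icc]
      omega
    change φ _ ∈ QDeltaSub k m n'
    rw [key I hI hsub hsub']
    exact qMinor_mem k m n' I hI hsub'
  refine ⟨(φ.comp (QDeltaSub k m n).val).codRestrict _ (fun x => hle x.2), ?_⟩
  intro I hI hsub hmem hsub'
  exact key I hI hsub hsub'

theorem exists_r_m (hm : 0 < m) (m' : ℕ) (hmm : m ≤ m') :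
    ∃ r : ↥(QDeltaSub k m n) →ₐ[kq k] ↥(QDeltaSub k m' n), rqProp k m n m' n r := by
  induction m', hmm using Nat.le_induction with
  | base =>
    refine ⟨AlgHom.id _ _, ?_⟩
    intro I hI hsub hmem hcard hsub'
    exact qMinor_congr k m n _ _
      (by rw [Finset.Icc_eq_empty (by omega), Finset.empty_union]) hI hsub hcard hsub'
  | succ m' hmm ih =>
    obtain ⟨r, hr⟩ := ih
    obtain ⟨s, hs⟩ := one_step k m' n (by omega)
    refine ⟨s.comp r, ?_⟩
    intro I hI hsub hmem hcard hsub'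
    have e : Finset.Icc (-((m' + 1 : ℕ) : ℤ)) (-(m : ℤ) - 1) ∪ I =
        insert (-((m' + 1 : ℕ) : ℤ)) (Finset.Icc (-(m' : ℤ)) (-(m : ℤ) - 1) ∪ I) := by
      ext z
      simp only [Finset.mem_union, Finset.mem_Icc, Finset.mem_insert]
      by_cases hz : z ∈ I
      · simp [hz]
      · simp only [hz, or_false]; omega
    have hsub2 : Finset.Icc (-(m' : ℤ)) (-(m : ℤ) - 1) ∪ I ⊆
        Finset.Icc (-(m' : ℤ)) ((n : ℤ) - 1) := by
      intro z hz
      rcases Finset.mem_union.1 hz with hz | hz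
      · have := Finset.mem_Icc.1 hz
        rw [Finset.mem_Icc]; omega
      · have := Finset.mem_Icc.1 (hsub hz)
        rw [Finset.mem_Icc]; omega
    have hnot : (-((m' + 1 : ℕ) : ℤ)) ∉ Finset.Icc (-(m' : ℤ)) (-(m : ℤ) - 1) ∪ I := by
      intro h
      have := Finset.mem_Icc.1 (hsub2 h)
      omega
    have hcard2 : (Finset.Icc (-(m' : ℤ)) (-(m : ℤ) - 1) ∪ I).card = m' := by
      rw [e, Finset.card_insert_of_notMem hnot] at hcard
      omega
    have h1 := hr I hI hsub hmem hcard2 hsub2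
    have h2 : r ⟨qMinor k m n I hI hsub, hmem⟩ =
        ⟨qMinor k m' n _ hcard2 hsub2, qMinor_mem k m' n _ hcard2 hsub2⟩ := Subtype.ext h1
    rw [AlgHom.comp_apply, h2]
    rw [hs _ hcard2 hsub2 _ (e ▸ hcard) (e ▸ hsub')]
    exact qMinor_congr k (m' + 1) n _ _ e.symm _ _ _ _

theorem union_facts {m n m' n' : ℕ} (hmm : m ≤ m') (hnn : n ≤ n') (I : Finset ℤ) (hI : I.card = m)
    (hsub : I ⊆ Finset.Icc (-(m : ℤ)) ((n : ℤ) - 1)) :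
    (Finset.Icc (-(m' : ℤ)) (-(m : ℤ) - 1) ∪ I).card = m' ∧
    Finset.Icc (-(m' : ℤ)) (-(m : ℤ) - 1) ∪ I ⊆ Finset.Icc (-(m' : ℤ)) ((n' : ℤ) - 1) := by
  constructor
  · rw [Finset.card_union_of_disjoint, Int.card_Icc, hI]
    · omega
    · rw [Finset.disjoint_left]
      intro z hz hz'
      have h1 := Finset.mem_Icc.1 hz
      have h2 := Finset.mem_Icc.1 (hsub hz')
      omega
  · intro z hz
    rcases Finset.mem_union.1 hz with hz | hz
    · have := Finset.mem_Icc.1 hz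
      rw [Finset.mem_Icc]; omega
    · have := Finset.mem_Icc.1 (hsub hz)
      rw [Finset.mem_Icc]; omega

theorem exists_r (hm : 0 < m) (m' n' : ℕ) (hmm : m ≤ m') (hnn : n ≤ n') :
    ∃ r : ↥(QDeltaSub k m n) →ₐ[kq k] ↥(QDeltaSub k m' n'), rqProp k m n m' n' r := by
  obtain ⟨r, hr⟩ := exists_r_m k m n hm m' hmm
  obtain ⟨s, hs⟩ := extend_n k m' n n' hnn
  refine ⟨s.comp r, ?_⟩
  intro I hI hsub hmem hcard hsub'
  have hsub2 := (union_facts hmm (le_refl n) I hI hsub).2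
  have h1 := hr I hI hsub hmem hcard hsub2
  have h2 : r ⟨qMinor k m n I hI hsub, hmem⟩ =
      ⟨qMinor k m' n _ hcard hsub2, qMinor_mem k m' n _ hcard hsub2⟩ := Subtype.ext h1
  rw [AlgHom.comp_apply, h2]
  exact hs _ hcard hsub2 _ hsub'

theorem Om_delta {K A : Type*} [CommRing K] [Ring A] [Algebra K A] (ν : K) (Y : ℤ → A) (p : ℤ)
    (f : Finset ℤ → A) (T : Finset ℤ) (hT : ∀ j ∈ T, p < j) (h1 : Y p = 1)
    (h0 : ∀ j ∈ T, Y j = 0) : Om ν Y f (insert p T) = f T := by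
  have hp : p ∉ T := fun h => lt_irrefl _ (hT p h)
  have hc : ecnt (insert p T) p = 0 := by
    rw [ecnt, Finset.card_eq_zero, Finset.filter_eq_empty_iff]
    intro z hz
    rcases Finset.mem_insert.1 hz with rfl | hz
    · simp
    · exact not_lt.2 (hT z hz).le
  rw [Om, Finset.sum_insert hp, Finset.erase_insert hp, hc, h1, Finset.sum_eq_zero]
  · simp
  · intro j hj
    rw [h0 j hj, zero_mul, smul_zero]

theorem OmL_delta {K A : Type*} [CommRing K] [Ring A] [Algebra K A] (ν : K) (Y : ℤ → ℤ → A)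
    (m d : ℕ) (I : Finset ℤ) (hI : ∀ i ∈ I, -(m : ℤ) ≤ i)
    (hY : ∀ i j, -((m + d : ℕ) : ℤ) ≤ i → i ≤ -(m : ℤ) - 1 →
      -((m + d : ℕ) : ℤ) ≤ j → j ≤ -1 → Y i j = if i = j then 1 else 0) :
    OmL ν Y (Finset.Icc (-((m + d : ℕ) : ℤ)) (-(m : ℤ) - 1) ∪ I).sort vac
      (Finset.Icc (-((m + d : ℕ) : ℤ)) (-1 : ℤ)) =
    OmL ν Y I.sort vac (Finset.Icc (-(m : ℤ)) (-1 : ℤ)) := by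
  induction d with
  | zero =>
    rw [Finset.Icc_eq_empty (by omega), Finset.empty_union, Nat.add_zero]
  | succ d ih =>
    rw [← ih (fun i j h1 h2 h3 h4 => hY i j (by omega) h2 (by omega) h4)]
    have e : Finset.Icc (-((m + (d + 1) : ℕ) : ℤ)) (-(m : ℤ) - 1) ∪ I =
        insert (-((m + (d + 1) : ℕ) : ℤ))
          (Finset.Icc (-((m + d : ℕ) : ℤ)) (-(m : ℤ) - 1) ∪ I) := by
      ext z
      simp only [Finset.mem_union, Finset.mem_Icc, Finset.mem_insert]
      by_cases hz : z ∈ I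
      · simp [hz]
      · simp only [hz, or_false]; omega
    have e2 : Finset.Icc (-((m + (d + 1) : ℕ) : ℤ)) (-1 : ℤ) =
        insert (-((m + (d + 1) : ℕ) : ℤ)) (Finset.Icc (-((m + d : ℕ) : ℤ)) (-1 : ℤ)) := by
      ext z
      simp only [Finset.mem_Icc, Finset.mem_insert]
      omega
    have hlt : ∀ z ∈ Finset.Icc (-((m + d : ℕ) : ℤ)) (-(m : ℤ) - 1) ∪ I,
        -((m + (d + 1) : ℕ) : ℤ) < z := by
      intro z hz
      rcases Finset.mem_union.1 hz with hz | hz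
      · have := Finset.mem_Icc.1 hz; omega
      · have := hI z hz; omega
    rw [e, e2, Finset.sort_insert _ (fun b hb => (hlt b hb).le)
      (fun h => lt_irrefl _ (hlt _ h)), OmL, Om_delta]
    · intro j hj
      have := Finset.mem_Icc.1 hj; omega
    · rw [hY _ _ (by omega) (by omega) (by omega) (by omega), if_pos rfl]
    · intro j hj
      have := Finset.mem_Icc.1 hj
      rw [hY _ _ (by omega) (by omega) (by omega) (by omega), if_neg (by omega)]

variable {k m n} in
theorem E_qMinor {m' n' : ℕ} (hmm : m ≤ m') (E : QMat k m' n' →ₐ[kq k] QMat k m n)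
    (hE : EqProp k m n m' n' E) (I : Finset ℤ) (hI : I.card = m)
    (hsub : I ⊆ Finset.Icc (-(m : ℤ)) ((n : ℤ) - 1))
    (hcard : (Finset.Icc (-(m' : ℤ)) (-(m : ℤ) - 1) ∪ I).card = m')
    (hsub' : Finset.Icc (-(m' : ℤ)) (-(m : ℤ) - 1) ∪ I ⊆
      Finset.Icc (-(m' : ℤ)) ((n' : ℤ) - 1)) :
    E (qMinor k m' n' (Finset.Icc (-(m' : ℤ)) (-(m : ℤ) - 1) ∪ I) hcard hsub') =
      qMinor k m n I hI hsub := by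
  let Y : ℤ → ℤ → QMat k m n := fun i j =>
    if h : i ∈ Finset.Icc (-(m : ℤ)) ((n : ℤ) - 1) ∧ j ∈ Finset.Icc (-(m : ℤ)) (-1 : ℤ) then
      av k m n ⟨i, h.1⟩ ⟨j, h.2⟩ else if i = j then 1 else 0
  have hE' : ∀ i j, E (av k m' n' i j) = Y i.1 j.1 := fun i j => hE i j
  have e := map_qMinor (k := k) (m := m') (n := n') (A := QMat k m n) E
    (Finset.Icc (-(m' : ℤ)) (-(m : ℤ) - 1) ∪ I) hcard hsub' Y hE'
  refine e.trans ?_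
  clear e hE' hE
  rw [qMinor_eq]
  obtain ⟨d, rfl⟩ := Nat.exists_eq_add_of_le hmm
  rw [OmL_delta]
  · apply OmL_congr
    intro i hi j hj
    have hi' : i ∈ Finset.Icc (-(m : ℤ)) ((n : ℤ) - 1) := hsub (by simpa using hi)
    simp only [Y, avZ]
    rw [dif_pos ⟨hi', hj⟩, dif_pos ⟨hi', hj⟩]
  · intro i hi
    exact (Finset.mem_Icc.1 (hsub hi)).1
  · intro i j h1 h2 h3 h4
    simp only [Y]
    rw [dif_neg]
    rintro ⟨h, -⟩
    have := Finset.mem_Icc.1 h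
    omega

end Final

/-- there is a unique `k_q`-algebra homomorphism
`r^q_{(m,n,m',n')} : k_q[Δ_{m,n}] → k_q[Δ_{m',n'}]` sending `D_{l_0…l_{m-1}}` to
`D_{-m',…,-m-1,l_0,…,l_{m-1}}`; moreover `e^q_{(m',n',m,n)} ∘ r^q_{(m,n,m',n')} = id`,
and in particular `r^q_{(m,n,m',n')}` is injective. -/
theorem stmt14 (k : Type) [Field k] (m n m' n' : ℕ) (hm : 0 < m) (hn : 0 < n)
    (hmm : m ≤ m') (hnn : n ≤ n')
    (E : QMat k m' n' →ₐ[kq k] QMat k m n) (hE : EqProp k m n m' n' E) :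
    (∃! r : ↥(QDeltaSub k m n) →ₐ[kq k] ↥(QDeltaSub k m' n'), rqProp k m n m' n' r) ∧
    (∀ r : ↥(QDeltaSub k m n) →ₐ[kq k] ↥(QDeltaSub k m' n'), rqProp k m n m' n' r →
      (∀ x : ↥(QDeltaSub k m n),
        E ((r x : QMat k m' n')) = (x : QMat k m n)) ∧
      Function.Injective r) := by
  constructor
  · obtain ⟨r, hr⟩ := exists_r k m n hm m' n' hmm hnn
    refine ⟨r, hr, ?_⟩
    intro s hs
    apply hom_ext_QDelta
    intro I hI hsub
    obtain ⟨h1, h2⟩ := union_facts hmm hnn I hI hsub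
    exact Subtype.ext ((hs I hI hsub _ h1 h2).trans (hr I hI hsub _ h1 h2).symm)
  · intro r hr
    have key : (E.comp (QDeltaSub k m' n').val).comp r = (QDeltaSub k m n).val := by
      apply hom_ext_QDelta
      intro I hI hsub
      obtain ⟨h1, h2⟩ := union_facts hmm hnn I hI hsub
      have e1 := congrArg E (hr I hI hsub (qMinor_mem k m n I hI hsub) h1 h2)
      exact e1.trans (E_qMinor hmm E hE I hI hsub h1 h2)
    have key' : ∀ x : ↥(QDeltaSub k m n), E ((r x : QMat k m' n')) = (x : QMat k m n) :=
      fun x => DFunLike.congr_fun key x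
    refine ⟨key', ?_⟩
    intro a b hab
    apply Subtype.ext
    rw [← key' a, ← key' b, hab]

end
end

section
/- Let k be an algebraically closed field of characteristic 0. For each (m,n), let ρ_{(m,n)} : k[b]_{m,n} → k[b]_{m,n} ⊗_k k[SL_{m,0}] be the k-algebra homomorphism with ρ_{(m,n)}(b_{i,j}) = Σ_{k=-m}^{-1} b_{i,k} ⊗ g_{k,j} (the coaction dual to the right action of SL_m on N×m matrices by right multiplication). Then for every compatible family x = (x_{(m,n)}) ∈ k[M_∞], the following are equivalent: (i) ρ_{(m,n)}(x_{(m,n)}) = x_{(m,n)} ⊗ 1 for all (m,n); (ii) x_{(m,n)} ∈ k[δ_{m,n}] for all (m,n). In other words, the ring of coinvariants k[M_∞]^{k[SL_{∞,0}]} equals k̂[δ_∞], the inverse limit of the homogeneous coordinate rings of the grassmannians, viewed inside k[M_∞] as the subring of families with all components in k[δ_{m,n}]. -/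
open MvPolynomial TensorProduct

set_option maxHeartbeats 2000000
set_option synthInstance.maxHeartbeats 400000

noncomputable section

/-- `k[a]_{m,n}`, the coordinate ring of generic `(m+n) × m` matrices. -/
abbrev MatRing (k : Type) [Field k] (m n : ℕ) : Type :=
  MvPolynomial (RowI m n × ColI m) k

/-- The maximal minor `d_I` on the rows in `I` (an `m`-element subset of `{-m,...,n-1}`). -/
def dMinor (k : Type) [Field k] (m n : ℕ) (I : Finset ℤ) (hI : I.card = m)
    (hsub : I ⊆ Finset.Icc (-(m : ℤ)) ((n : ℤ) - 1)) : MatRing k m n :=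
  Matrix.det (Matrix.of fun s t : Fin m =>
    (X (⟨I.orderEmbOfFin hI s, hsub (Finset.orderEmbOfFin_mem I hI s)⟩,
       ⟨-(m : ℤ) + (t : ℕ), by
          have := t.2
          simp only [Finset.mem_Icc]
          omega⟩) : MatRing k m n))

/-- `k[δ_{m,n}]`, the subalgebra generated by all the maximal minors. -/
def DeltaSub (k : Type) [Field k] (m n : ℕ) : Subalgebra k (MatRing k m n) :=
  Algebra.adjoin k {x | ∃ I hI hsub, x = dMinor k m n I hI hsub}

/-- The substitution homomorphism `E_{(m',n',m,n)} : k[a]_{m',n'} → k[a]_{m,n}`. -/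
def Emap (k : Type) [Field k] (m n m' n' : ℕ) : MatRing k m' n' →ₐ[k] MatRing k m n :=
  aeval fun p : RowI m' n' × ColI m' =>
    if h : (p.1.1 ∈ Finset.Icc (-(m : ℤ)) ((n : ℤ) - 1)) ∧
        (p.2.1 ∈ Finset.Icc (-(m : ℤ)) (-1 : ℤ)) then
      (X (⟨p.1.1, h.1⟩, ⟨p.2.1, h.2⟩) : MatRing k m n)
    else if p.1.1 = p.2.1 then 1 else 0



open MvPolynomial TensorProduct

/-- Row/column indices of the generic `N × N` matrix, `N = m+n`:
the integers `-m, ..., n-1`. -/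
abbrev SqIdx (m n : ℕ) : Type := ↥(Finset.Icc (-(m : ℤ)) ((n : ℤ) - 1))

/-- The determinant of the generic `N × N` matrix `(g_{i,j})`. -/
def genDet (k : Type) [Field k] (m n : ℕ) : MvPolynomial (SqIdx m n × SqIdx m n) k :=
  Matrix.det (Matrix.of fun i j : SqIdx m n => (X (i, j) : MvPolynomial (SqIdx m n × SqIdx m n) k))

/-- `k[SL_{m,n}]`: the quotient of the polynomial ring in the `g_{i,j}` by `(det(g) - 1)`. -/
abbrev SLring (k : Type) [Field k] (m n : ℕ) : Type :=
  MvPolynomial (SqIdx m n × SqIdx m n) k ⧸ Ideal.span {genDet k m n - 1}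

/-- The image of the generator `g_{i,j}` in `k[SL_{m,n}]`. -/
def gvar (k : Type) [Field k] (m n : ℕ) (i j : SqIdx m n) : SLring k m n :=
  Ideal.Quotient.mk _ (X (i, j))

/-- The coaction `ρ_{(m,n,m_0)} : k[b]_{m,n} → k[b]_{m,n} ⊗ k[SL_{m_0,0}]`:
`b_{i,j} ↦ Σ_l b_{i,l} ⊗ g_{l,j}` for `-m_0 ≤ j ≤ -1`, and `b_{i,j} ↦ b_{i,j} ⊗ 1`
for `-m ≤ j ≤ -m_0 - 1`. -/
def coactB (k : Type) [Field k] (m n m0 : ℕ) (h : m0 ≤ m) :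
    MatRing k m n →ₐ[k] MatRing k m n ⊗[k] SLring k m0 0 :=
  aeval fun p : RowI m n × ColI m =>
    if h2 : p.2.1 ∈ Finset.Icc (-(m0 : ℤ)) (((0 : ℕ) : ℤ) - 1) then
      ∑ l : SqIdx m0 0,
        (X (p.1, ⟨l.1, by
          have hl := Finset.mem_Icc.mp l.2
          have hm : (m0 : ℤ) ≤ (m : ℤ) := by exact_mod_cast h
          exact Finset.mem_Icc.mpr ⟨by omega, by omega⟩⟩) : MatRing k m n) ⊗ₜ[k]
          gvar k m0 0 l ⟨p.2.1, h2⟩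
    else (X p : MatRing k m n) ⊗ₜ[k] 1

/-- The inverse limit of an inverse system of rings, realized concretely as the
subring of the product consisting of the compatible families. -/
def ringInvLim {ι : Type*} [Preorder ι] (G : ι → Type*) [∀ i, Ring (G i)]
    (f : ∀ i j : ι, i ≤ j → (G j →+* G i)) : Subring (∀ i, G i) where
  carrier := {x | ∀ (i j : ι) (h : i ≤ j), f i j h (x j) = x i}
  zero_mem' := by intro i j h; simp
  one_mem' := by intro i j h; simp
  add_mem' := by
    intro a b ha hb i j h
    simp only [Pi.add_apply, map_add, ha i j h, hb i j h]
  mul_mem' := by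
    intro a b ha hb i j h
    simp only [Pi.mul_apply, map_mul, ha i j h, hb i j h]
  neg_mem' := by
    intro a ha i j h
    simp only [Pi.neg_apply, map_neg, ha i j h]

/-- The index set: pairs of positive integers, ordered componentwise. -/
abbrev PIdx : Type := {p : ℕ × ℕ // 0 < p.1 ∧ 0 < p.2}

/-- The pairs `(m,n)` with `m ≥ m_0`. -/
abbrev PIdxGe (m0 : ℕ) : Type := {p : PIdx // m0 ≤ p.1.1}

/-- `k[M_∞]`, the inverse limit of the matrix coordinate rings `k[b]_{m,n}` along the
maps `E_{(m',n',m,n)}`. -/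
def MatInf (k : Type) [Field k] : Subring (∀ p : PIdx, MatRing k p.1.1 p.1.2) :=
  ringInvLim (fun p : PIdx => MatRing k p.1.1 p.1.2)
    (fun p q _ => (Emap k p.1.1 p.1.2 q.1.1 q.1.2).toRingHom)

section FFT

/-- The factorial of a multi-index. -/
def mfact {σ : Type} [Fintype σ] (α : σ →₀ ℕ) : ℕ := ∏ i, (α i).factorial

/-- The apolar pairing with `Q`, as a linear functional. -/
def apol {σ R : Type} [Fintype σ] [CommRing R] (Q : MvPolynomial σ R) :
    MvPolynomial σ R →ₗ[R] R :=
  (MvPolynomial.basisMonomials σ R).constr R (fun α => coeff α Q * (mfact α : R))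

lemma apol_monomial {σ R : Type} [Fintype σ] [CommRing R] (Q : MvPolynomial σ R)
    (α : σ →₀ ℕ) (a : R) : apol Q (monomial α a) = a * (coeff α Q * (mfact α : R)) := by
  have h : monomial α a = a • (MvPolynomial.basisMonomials σ R α) := by
    simp [smul_monomial]
  rw [h, map_smul, apol, Module.Basis.constr_basis, smul_eq_mul]

lemma apol_map {σ R S : Type} [Fintype σ] [CommRing R] [CommRing S] (f : R →+* S)
    (Q P : MvPolynomial σ R) : apol (map f Q) (map f P) = f (apol Q P) := by
  induction P using MvPolynomial.induction_on' with
  | monomial α a => simp [apol_monomial, coeff_map]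
  | add p q hp hq => simp [hp, hq]

lemma apol_eq_sum {σ R : Type} [Fintype σ] [CommRing R] (Q P : MvPolynomial σ R) :
    apol Q P = ∑ α ∈ P.support, coeff α P * (coeff α Q * (mfact α : R)) := by
  conv_lhs => rw [P.as_sum, map_sum]
  simp only [apol_monomial]

lemma mfact_pos {σ : Type} [Fintype σ] (α : σ →₀ ℕ) : 0 < mfact α :=
  Finset.prod_pos fun _ _ => Nat.factorial_pos _

lemma apol_self_pos {σ : Type} [Fintype σ] (P : MvPolynomial σ ℤ) (hP : P ≠ 0) :
    0 < apol P P := by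
  rw [apol_eq_sum]
  apply Finset.sum_pos
  · intro α hα
    have h1 : coeff α P ≠ 0 := by simpa using hα
    have h2 : (0 : ℤ) < (mfact α : ℤ) := by exact_mod_cast mfact_pos α
    rw [← mul_assoc]
    exact mul_pos (mul_self_pos.mpr h1) h2
  · simpa using hP

lemma mfact_add_single {σ : Type} [Fintype σ] [DecidableEq σ] (α : σ →₀ ℕ) (s : σ) :
    mfact (α + Finsupp.single s 1) = (α s + 1) * mfact α := by
  unfold mfact
  rw [← Finset.mul_prod_erase Finset.univ _ (Finset.mem_univ s),
    ← Finset.mul_prod_erase Finset.univ (fun i => (α i).factorial) (Finset.mem_univ s)]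
  have : ∏ x ∈ Finset.univ.erase s, ((α + Finsupp.single s 1 : σ →₀ ℕ) x).factorial
      = ∏ x ∈ Finset.univ.erase s, (α x).factorial := by
    apply Finset.prod_congr rfl
    intro x hx
    have : s ≠ x := fun h => by simp [h] at hx
    simp [this]
  rw [this]
  simp [Nat.factorial_succ, mul_assoc]

lemma apol_mul_X {σ R : Type} [Fintype σ] [CommRing R] (Q P : MvPolynomial σ R) (s : σ) :
    apol Q (P * X s) = apol (pderiv s Q) P := by
  classical
  induction P using MvPolynomial.induction_on' with
  | monomial α a =>
    rw [X, monomial_mul, apol_monomial, apol_monomial, coeff_pderiv, mfact_add_single]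
    push_cast
    ring
  | add p q hp hq => simp [add_mul, hp, hq]

lemma apol_add_left {σ R : Type} [Fintype σ] [CommRing R] (Q Q' P : MvPolynomial σ R) :
    apol (Q + Q') P = apol Q P + apol Q' P := by
  induction P using MvPolynomial.induction_on' with
  | monomial α a => simp [apol_monomial]; ring
  | add p q hp hq => rw [map_add, map_add, map_add, hp, hq]; ring

lemma apol_C_mul_left {σ R : Type} [Fintype σ] [CommRing R] (c : R) (Q P : MvPolynomial σ R) :
    apol (C c * Q) P = c * apol Q P := by
  induction P using MvPolynomial.induction_on' with
  | monomial α a => simp [apol_monomial]; ring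
  | add p q hp hq => rw [map_add, map_add, hp, hq]; ring

lemma apol_sum_left {σ R ι : Type} [Fintype σ] [CommRing R] (s : Finset ι)
    (Q : ι → MvPolynomial σ R) (P : MvPolynomial σ R) :
    apol (∑ i ∈ s, Q i) P = ∑ i ∈ s, apol (Q i) P := by
  classical
  induction s using Finset.induction_on with
  | empty =>
    have := apol_C_mul_left (0 : R) (0 : MvPolynomial σ R) P
    simpa using this
  | insert a s ha ih => rw [Finset.sum_insert ha, Finset.sum_insert ha, apol_add_left, ih]

lemma apol_C {σ R : Type} [Fintype σ] [CommRing R] (Q : MvPolynomial σ R) (c : R) :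
    apol Q (C c) = c * coeff 0 Q := by
  rw [C_apply, apol_monomial]
  simp [mfact]

variable {ι κ R : Type} [Fintype ι] [Fintype κ] [CommRing R]

/-- Substitution `c ↦ b g`. -/
def subL (b : ι → κ → R) : MvPolynomial (ι × κ) R →ₐ[R] MvPolynomial (κ × κ) R :=
  aeval fun p => ∑ l, C (b p.1 l) * X (l, p.2)

/-- Substitution `g ↦ bᵀ c`. -/
def subT (b : ι → κ → R) : MvPolynomial (κ × κ) R →ₐ[R] MvPolynomial (ι × κ) R :=
  aeval fun p => ∑ i, C (b i p.1) * X (i, p.2)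

lemma pderiv_subL (b : ι → κ → R) (Q : MvPolynomial (ι × κ) R) (l j : κ) :
    pderiv (l, j) (subL b Q) = ∑ i, C (b i l) * subL b (pderiv (i, j) Q) := by
  classical
  induction Q using MvPolynomial.induction_on with
  | C a => simp [subL]
  | add p q hp hq => simp [hp, hq, mul_add, Finset.sum_add_distrib]
  | mul_X p s hp =>
    rw [map_mul, pderiv_mul, hp]
    simp only [pderiv_mul, map_add, map_mul, mul_add, Finset.sum_add_distrib]
    congr 1
    · rw [Finset.sum_mul]; exact Finset.sum_congr rfl fun i _ => by ring
    · obtain ⟨s1, s2⟩ := s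
      have h1 : (pderiv (l, j)) (subL b (X (s1, s2))) = if s2 = j then C (b s1 l) else 0 := by
        simp only [subL, aeval_X, map_sum, pderiv_C_mul, pderiv_X]
        by_cases h : s2 = j
        · simp [h, Pi.single_apply]
        · simp [h]
      have h2 : ∀ i, subL b (pderiv (i, j) (X (s1, s2) : MvPolynomial (ι × κ) R))
          = if s1 = i ∧ s2 = j then 1 else 0 := by
        intro i
        simp only [pderiv_X, Pi.single_apply, Prod.mk.injEq]
        split_ifs <;> simp
      rw [h1]
      simp only [h2]
      by_cases h : s2 = j
      · simp [h, mul_comm]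
      · simp [h]

lemma coeff_zero_subL (b : ι → κ → R) (Q : MvPolynomial (ι × κ) R) :
    coeff 0 (subL b Q) = coeff 0 Q := by
  simp only [← MvPolynomial.constantCoeff_eq]
  induction Q using MvPolynomial.induction_on with
  | C a => simp [subL]
  | add p q hp hq => simp [hp, hq]
  | mul_X p s hp => simp [subL]

lemma apol_adjoint (b : ι → κ → R) (P : MvPolynomial (κ × κ) R) :
    ∀ Q : MvPolynomial (ι × κ) R, apol (subL b Q) P = apol Q (subT b P) := by
  induction P using MvPolynomial.induction_on with
  | C a => intro Q; simp only [subT, algHom_C, algebraMap_eq, apol_C, coeff_zero_subL]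
  | add p q hp hq => intro Q; simp [hp, hq]
  | mul_X p s hp =>
    intro Q
    obtain ⟨l, j⟩ := s
    rw [apol_mul_X, pderiv_subL, apol_sum_left, map_mul]
    have : subT b (X (l, j)) = ∑ i, C (b i l) * X (i, j) := by simp [subT]
    rw [this, Finset.mul_sum, map_sum]
    refine Finset.sum_congr rfl fun i _ => ?_
    rw [apol_C_mul_left, hp, mul_left_comm, ← smul_eq_C_mul, map_smul, apol_mul_X, smul_eq_mul]

end FFT

section FFT2

variable {ι κ : Type} [Fintype ι] [Fintype κ] [DecidableEq κ]

lemma subT_det {R : Type} [CommRing R] (b : ι → κ → R) :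
    subT b (Matrix.mvPolynomialX κ κ R).det =
      ∑ e : κ → ι, C (Matrix.det (Matrix.of fun l j => b (e j) l)) * ∏ j, X (e j, j) := by
  classical
  simp only [Matrix.det_apply', map_sum, map_mul, map_prod, map_intCast, Matrix.of_apply]
  have h : ∀ l j, subT b (Matrix.mvPolynomialX κ κ R l j) = ∑ i, C (b i l) * X (i, j) := by
    intro l j; simp [subT]
  simp only [h, Finset.prod_univ_sum, Finset.mul_sum, Finset.sum_mul, Fintype.piFinset_univ,
    Finset.prod_mul_distrib]
  rw [Finset.sum_comm]
  simp only [mul_assoc]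

/-- The algebra generated by all maximal minors. -/
def deltaGen (k ι κ : Type) [Field k] [Fintype κ] [DecidableEq κ] :
    Subalgebra k (MvPolynomial (ι × κ) k) :=
  Algebra.adjoin k {x | ∃ e : κ → ι, x = Matrix.det (Matrix.of fun l j => X (e j, l))}

lemma core_mem (k : Type) [Field k] [CharZero k] (f : MvPolynomial (ι × κ) k) (r : ℕ)
    (h : subL (fun i l => (X (i, l) : MvPolynomial (ι × κ) k)) (map C f) =
      (Matrix.mvPolynomialX κ κ (MvPolynomial (ι × κ) k)).det ^ r * C f) :
    f ∈ deltaGen k ι κ := by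
  classical
  let R := MvPolynomial (ι × κ) k
  set D := (Matrix.mvPolynomialX κ κ R).det with hD
  set δ := deltaGen k ι κ with hδ
  set b : ι → κ → R := fun i l => X (i, l) with hb
  -- the image of the determinant power has coefficients in δ
  have h1 : subT b (D ^ r) ∈ (map (σ := ι × κ) (δ.val : δ →+* R)).rangeS := by
    rw [map_pow]
    apply pow_mem
    rw [hD, subT_det]
    refine sum_mem fun e _ => mul_mem ?_ (prod_mem fun j _ => ⟨X (e j, j), by simp⟩)
    refine ⟨C ⟨_, Algebra.subset_adjoin ⟨e, rfl⟩⟩, ?_⟩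
    simp [hb]
  obtain ⟨P, hP⟩ := h1
  have h2 : map C f = map (δ.val : δ →+* R) (map (algebraMap k δ) f) := by
    rw [MvPolynomial.map_map]; rfl
  have h3 : apol (subL b (map C f)) (D ^ r) ∈ δ := by
    rw [apol_adjoint, ← hP, h2, apol_map]
    exact (apol _ _ : δ).2
  have hDZ : D ^ r = map (Int.castRingHom R) ((Matrix.mvPolynomialX κ κ ℤ).det ^ r) := by
    have : Matrix.mvPolynomialX κ κ R =
        (map (Int.castRingHom R)).mapMatrix (Matrix.mvPolynomialX κ κ ℤ) := by
      apply Matrix.ext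
      intro i j
      simp
    rw [map_pow, RingHom.map_det, ← this]
  set c : ℤ := apol ((Matrix.mvPolynomialX κ κ ℤ).det ^ r) ((Matrix.mvPolynomialX κ κ ℤ).det ^ r)
    with hc
  have hc0 : 0 < c := apol_self_pos _ (pow_ne_zero _ (Matrix.det_mvPolynomialX_ne_zero κ ℤ))
  have h4 : apol (subL b (map C f)) (D ^ r) = (c : k) • f := by
    rw [h, mul_comm, apol_C_mul_left]
    rw [hDZ, apol_map, ← hc, mul_comm, smul_eq_C_mul]
    simp
  rw [h4] at h3
  have hck : (c : k) ≠ 0 := by exact_mod_cast hc0.ne'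
  have := δ.smul_mem h3 (c : k)⁻¹
  rwa [smul_smul, inv_mul_cancel₀ hck, one_smul] at this

/-- The action of a matrix `M` on polynomials. -/
def coM {k K : Type} [Field k] [Field K] [Algebra k K] (M : Matrix κ κ K) :
    MvPolynomial (ι × κ) k →ₐ[k] MvPolynomial (ι × κ) K :=
  aeval fun p => ∑ l, X (p.1, l) * C (M l p.2)

/-- Invariance under all points of `SL`. -/
def SLInv {k : Type} [Field k] (f : MvPolynomial (ι × κ) k) : Prop :=
  ∀ (K : Type) [Field K] [Algebra k K] (M : Matrix κ κ K), M.det = 1 →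
    coM M f = map (algebraMap k K) f

lemma homogComp_comm {σ τ R S : Type} [CommRing R] [CommRing S]
    (T : MvPolynomial σ R →+ MvPolynomial τ S)
    (hT : ∀ f d, f.IsHomogeneous d → (T f).IsHomogeneous d) (f : MvPolynomial σ R) (d : ℕ) :
    T (homogeneousComponent d f) = homogeneousComponent d (T f) := by
  induction f using MvPolynomial.induction_on' with
  | monomial α a =>
    have h : (monomial α a).IsHomogeneous α.degree := isHomogeneous_monomial a rfl
    rw [homogeneousComponent_of_mem h, homogeneousComponent_of_mem (hT _ _ h)]
    split_ifs <;> simp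
  | add p q hp hq => simp [hp, hq]

lemma SLInv_comp {k : Type} [Field k] (f : MvPolynomial (ι × κ) k) (hf : SLInv f) (d : ℕ) :
    SLInv (homogeneousComponent d f) := by
  intro K _ _ M hM
  have h1 := homogComp_comm (coM (ι := ι) (k := k) M : _ →+ MvPolynomial (ι × κ) K) (by
    intro f d hf
    have := hf.aeval (n := 1) (fun p : ι × κ => ∑ l, X (p.1, l) * C (M l p.2)) (by
      intro p
      refine IsHomogeneous.sum _ _ _ fun l _ => ?_
      exact (isHomogeneous_X _ _).mul (isHomogeneous_C _ _))
    rw [one_mul] at this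
    exact this) f d
  have h2 := homogComp_comm (map (σ := ι × κ) (algebraMap k K) : _ →+ MvPolynomial (ι × κ) K)
    (fun f d hf => hf.map _) f d
  have h3 := hf K M hM
  simp only [AddMonoidHom.coe_coe] at h1 h2
  rw [h1, h2, h3]

lemma aeval_scale {σ k K : Type} [Field k] [Field K] [Algebra k K] (f : MvPolynomial σ k) (d : ℕ)
    (hf : f.IsHomogeneous d) (c : K) (g : σ → K) :
    aeval (fun p => c * g p) f = c ^ d * aeval g f := by
  rw [aeval_def, aeval_def, eval₂_eq, eval₂_eq, Finset.mul_sum]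
  refine Finset.sum_congr rfl fun α hα => ?_
  have := hf.degree_eq_sum_deg_support hα
  simp only [mul_pow, Finset.prod_mul_distrib, Finset.prod_pow_eq_pow_sum]
  rw [this, mul_left_comm]

lemma SLInv_homog_mem (k : Type) [Field k] [CharZero k] [Nonempty κ] (f : MvPolynomial (ι × κ) k)
    (hf : SLInv f) (d : ℕ) (hd : f.IsHomogeneous d) : f ∈ deltaGen k ι κ := by
  classical
  by_cases hf0 : f = 0
  · rw [hf0]; exact zero_mem _
  let R := MvPolynomial (ι × κ) k
  let A := MvPolynomial (κ × κ) R
  let K := AlgebraicClosure (FractionRing A)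
  let m := Fintype.card κ
  have hm : 0 < m := Fintype.card_pos
  have hinj : Function.Injective (algebraMap A K) := by
    rw [IsScalarTower.algebraMap_eq A (FractionRing A) K]
    exact (algebraMap (FractionRing A) K).injective.comp (IsFractionRing.injective A _)
  let D : A := (Matrix.mvPolynomialX κ κ R).det
  let φ := algebraMap A K
  let G : Matrix κ κ K := fun l j => φ (X (l, j))
  let b : ι → κ → K := fun i l => φ (C (X (i, l)))
  have hG : G.det = φ D := by
    rw [RingHom.map_det]; congr 1
  have hD : φ D ≠ 0 := by
    rw [Ne, map_eq_zero_iff _ hinj]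
    exact Matrix.det_mvPolynomialX_ne_zero κ R
  obtain ⟨T, hT⟩ := IsAlgClosed.exists_pow_nat_eq (φ D)⁻¹ hm
  have : CharZero K := charZero_of_injective_algebraMap (algebraMap k K).injective
  have : NeZero (m : K) := ⟨by exact_mod_cast hm.ne'⟩
  obtain ⟨ζ, hζ⟩ := HasEnoughRootsOfUnity.exists_primitiveRoot K m
  set F : K := φ (subL (fun i l => (X (i, l) : R)) (map C f)) with hF
  set fK : K := φ (C f) with hfK
  have hfK0 : fK ≠ 0 := by
    rw [hfK, Ne, map_eq_zero_iff _ hinj]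
    exact fun h => hf0 (C_injective (κ × κ) R (h.trans C_0.symm))
  have key : ∀ U : K, U ^ m = (φ D)⁻¹ → U ^ d * F = fK := by
    intro U hU
    have h1 := hf K (U • G) (by
      rw [Matrix.det_smul, hG]
      change U ^ m * _ = 1
      rw [hU, inv_mul_cancel₀ hD])
    have h2 := congrArg (aeval (R := K) (fun p : ι × κ => b p.1 p.2)) h1
    have hr : aeval (R := K) (fun p : ι × κ => b p.1 p.2) (map (algebraMap k K) f) = fK := by
      rw [aeval_map_algebraMap]
      have : aeval (R := k) (fun p : ι × κ => b p.1 p.2) =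
          ((IsScalarTower.toAlgHom k A K).comp (IsScalarTower.toAlgHom k R A)) := by
        ext p; simp [b, φ]; rfl
      rw [this]; rfl
    have hl : aeval (R := K) (fun p : ι × κ => b p.1 p.2) (coM (U • G) f) = U ^ d * F := by
      have e1 : aeval (R := K) (fun p : ι × κ => b p.1 p.2) (coM (U • G) f) =
          aeval (R := k) (fun p : ι × κ => U * ∑ l, b p.1 l * G l p.2) f := by
        have : ((aeval (R := K) (fun p : ι × κ => b p.1 p.2)).restrictScalars k).comp
            (coM (k := k) (U • G)) = aeval (R := k) (fun p : ι × κ => U * ∑ l, b p.1 l * G l p.2) := by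
          ext p
          simp [coM, Finset.mul_sum, mul_left_comm]
        rw [← this]; rfl
      rw [e1, aeval_scale f d hd]
      congr 1
      have : aeval (R := k) (fun p : ι × κ => ∑ l, b p.1 l * G l p.2) =
          (IsScalarTower.toAlgHom k A K).comp
            (((subL (fun i l => (X (i, l) : R))).restrictScalars k).comp
              (mapAlgHom (Algebra.ofId k R))) := by
        ext p
        simp [subL, b, G, φ]
      rw [this]; rfl
    rw [hr, hl] at h2
    exact h2
  have k1 := key T hT
  have k2 := key (ζ * T) (by rw [mul_pow, hζ.pow_eq_one, one_mul, hT])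
  rw [mul_pow, mul_assoc, k1] at k2
  have hz : ζ ^ d = 1 := mul_right_cancel₀ hfK0 (by rw [k2, one_mul])
  obtain ⟨r, rfl⟩ := hζ.dvd_of_pow_eq_one _ hz
  apply core_mem k f r
  apply hinj
  change F = φ (D ^ r * C f)
  rw [map_mul, map_pow, ← hfK, ← k1, pow_mul, hT, ← mul_assoc, ← mul_pow, mul_inv_cancel₀ hD,
    one_pow, one_mul]

theorem SLInv_mem (k : Type) [Field k] [CharZero k] [Nonempty κ] (f : MvPolynomial (ι × κ) k)
    (hf : SLInv f) : f ∈ deltaGen k ι κ := by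
  rw [← sum_homogeneousComponent f]
  exact sum_mem fun d _ => SLInv_homog_mem k _ (SLInv_comp f hf d) d
    (homogeneousComponent_isHomogeneous d f)

end FFT2
section Final

/-- The columns `-m, ..., -1` enumerated by `Fin m`. -/
def colE (m : ℕ) : Fin m ≃ ColI m :=
  Equiv.ofBijective (fun t => ⟨-(m : ℤ) + (t : ℕ), by
      have := t.2
      simp only [Finset.mem_Icc]
      omega⟩) (by
    constructor
    · intro a b h
      simp only [Subtype.mk.injEq] at h
      ext; omega
    · rintro ⟨y, hy⟩
      have hy' := Finset.mem_Icc.mp hy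
      refine ⟨⟨(y + m).toNat, by omega⟩, ?_⟩
      simp only [Subtype.mk.injEq]
      omega)

/-- Identification of the two index types of columns. -/
def sqE (m : ℕ) : SqIdx m 0 ≃ ColI m :=
  Equiv.subtypeEquivRight (by intro x; simp)

lemma dMinor_eq (k : Type) [Field k] (m n : ℕ) (I : Finset ℤ) (hI : I.card = m)
    (hsub : I ⊆ Finset.Icc (-(m : ℤ)) ((n : ℤ) - 1)) :
    dMinor k m n I hI hsub = Matrix.det (Matrix.of fun s t : Fin m =>
      (X (⟨I.orderEmbOfFin hI s, hsub (Finset.orderEmbOfFin_mem I hI s)⟩, colE m t) :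
        MatRing k m n)) := rfl

lemma deltaGen_le (k : Type) [Field k] (m n : ℕ) :
    deltaGen k (RowI m n) (ColI m) ≤ DeltaSub k m n := by
  apply Algebra.adjoin_le
  rintro x ⟨e, rfl⟩
  change _ ∈ DeltaSub k m n
  by_cases he : Function.Injective e
  · let I : Finset ℤ := Finset.univ.image (fun j : ColI m => (e j).1)
    have hinj : Function.Injective (fun j : ColI m => (e j).1) :=
      Subtype.val_injective.comp he
    have hI : I.card = m := by
      rw [Finset.card_image_of_injective _ hinj, Finset.card_univ,
        ← Fintype.card_congr (colE m), Fintype.card_fin]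
    have hsub : I ⊆ Finset.Icc (-(m : ℤ)) ((n : ℤ) - 1) := by
      intro y hy
      obtain ⟨j, _, rfl⟩ := Finset.mem_image.mp hy
      exact (e j).2
    let ε : ColI m ≃ I := Equiv.ofBijective
      (fun j => ⟨(e j).1, Finset.mem_image_of_mem _ (Finset.mem_univ j)⟩) (by
        constructor
        · intro a b h
          simp only [Subtype.mk.injEq] at h
          exact hinj h
        · rintro ⟨y, hy⟩
          obtain ⟨j, _, rfl⟩ := Finset.mem_image.mp hy
          exact ⟨j, rfl⟩)
    let π : Equiv.Perm (Fin m) := ((colE m).trans ε).trans (I.orderIsoOfFin hI).toEquiv.symm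
    have hπ : ∀ s, I.orderEmbOfFin hI (π s) = (e (colE m s)).1 := by
      intro s
      rw [← Finset.coe_orderIsoOfFin_apply]
      simp only [π, Equiv.trans_apply]
      exact congrArg Subtype.val ((I.orderIsoOfFin hI).apply_symm_apply (ε (colE m s)))
    have hd : Matrix.det (Matrix.of fun l j : ColI m => (X (e j, l) : MatRing k m n)) =
        (Equiv.Perm.sign π : ℤ) • dMinor k m n I hI hsub := by
      rw [← Matrix.det_submatrix_equiv_self (colE m), ← Matrix.det_transpose, dMinor_eq,
        zsmul_eq_mul, ← Matrix.det_permute]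
      congr 1
      ext1 s t
      simp only [Matrix.transpose_apply, Matrix.submatrix_apply, Matrix.of_apply, id]
      congr 2
      exact Subtype.ext (hπ s).symm
    rw [hd]
    have hmem : dMinor k m n I hI hsub ∈ DeltaSub k m n :=
      Algebra.subset_adjoin ⟨I, hI, hsub, rfl⟩
    exact zsmul_mem hmem _
  · simp only [Function.Injective, not_forall] at he
    obtain ⟨a, b, hab, hne⟩ := he
    rw [Matrix.det_zero_of_column_eq hne (by intro i; simp [hab])]
    exact zero_mem _

lemma coactB_X (k : Type) [Field k] (m n : ℕ) (i : RowI m n) (j : ColI m) :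
    coactB k m n m le_rfl (X (i, j)) = ∑ l : ColI m,
      (X (i, l) : MatRing k m n) ⊗ₜ[k] gvar k m 0 ((sqE m).symm l) ((sqE m).symm j) := by
  have hj : j.1 ∈ Finset.Icc (-(m : ℤ)) (((0 : ℕ) : ℤ) - 1) := ((sqE m).symm j).2
  rw [← Equiv.sum_comp (sqE m)]
  simp only [coactB, aeval_X]
  rw [dif_pos hj]
  refine Finset.sum_congr rfl fun l _ => ?_
  rw [Equiv.symm_apply_apply]
  rfl

lemma det_gvar (k : Type) [Field k] (m : ℕ) :
    Matrix.det (Matrix.of fun i j : SqIdx m 0 => gvar k m 0 i j) = 1 := by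
  have h : Matrix.of (fun i j : SqIdx m 0 => gvar k m 0 i j) =
      (Ideal.Quotient.mk (Ideal.span {genDet k m 0 - 1})).mapMatrix
        (Matrix.of fun i j : SqIdx m 0 => X (i, j)) := by
    ext1 i j
    rfl
  rw [h, ← RingHom.map_det]
  change Ideal.Quotient.mk _ (genDet k m 0) = 1
  rw [← map_one (Ideal.Quotient.mk _), Ideal.Quotient.eq]
  exact Ideal.subset_span rfl

lemma algHom_det (k A B S : Type) [Field k] [CommRing A] [CommRing B] [CommRing S]
    [Algebra k A] [Algebra k B] [Algebra k S] (f iL : A →ₐ[k] B) (iR : S →ₐ[k] B)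
    {q : Type} [Fintype q] [DecidableEq q] (P : Matrix q q A) (g : Matrix q q S)
    (h : ∀ s t, f (P s t) = ∑ u, iL (P s u) * iR (g u t)) (hg : g.det = 1) :
    f P.det = iL P.det := by
  have h' : f.mapMatrix P = iL.mapMatrix P * iR.mapMatrix g := by
    ext1 s t
    rw [Matrix.mul_apply]
    exact h s t
  rw [AlgHom.map_det, h', Matrix.det_mul, ← AlgHom.map_det, ← AlgHom.map_det, hg, map_one, mul_one]

lemma coactB_dMinor (k : Type) [Field k] (m n : ℕ) (I : Finset ℤ) (hI : I.card = m)
    (hsub : I ⊆ Finset.Icc (-(m : ℤ)) ((n : ℤ) - 1)) :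
    coactB k m n m le_rfl (dMinor k m n I hI hsub) =
      dMinor k m n I hI hsub ⊗ₜ[k] (1 : SLring k m 0) := by
  let iL : MatRing k m n →ₐ[k] MatRing k m n ⊗[k] SLring k m 0 :=
    Algebra.TensorProduct.includeLeft
  let iR : SLring k m 0 →ₐ[k] MatRing k m n ⊗[k] SLring k m 0 :=
    Algebra.TensorProduct.includeRight
  let P : Matrix (Fin m) (Fin m) (MatRing k m n) := Matrix.of fun s t : Fin m =>
      (X (⟨I.orderEmbOfFin hI s, hsub (Finset.orderEmbOfFin_mem I hI s)⟩, colE m t) :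
        MatRing k m n)
  let g : Matrix (SqIdx m 0) (SqIdx m 0) (SLring k m 0) :=
    Matrix.of fun i j : SqIdx m 0 => gvar k m 0 i j
  let τ : Fin m ≃ SqIdx m 0 := (colE m).trans (sqE m).symm
  have h : ∀ s t, coactB k m n m le_rfl (P s t) =
      ∑ u, iL (P s u) * iR (g.submatrix τ τ u t) := by
    intro s t
    simp only [P, Matrix.of_apply, coactB_X]
    rw [← Equiv.sum_comp (colE m)]
    refine Finset.sum_congr rfl fun u _ => ?_
    simp [iL, iR, g, τ]
  rw [dMinor_eq]
  exact algHom_det k (MatRing k m n) (MatRing k m n ⊗[k] SLring k m 0) (SLring k m 0)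
    (coactB k m n m le_rfl) iL iR P (g.submatrix τ τ) h
    (by rw [Matrix.det_submatrix_equiv_self]; exact det_gvar k m)

lemma coinv_SLInv (k : Type) [Field k] (m n : ℕ) (f : MatRing k m n)
    (hf : coactB k m n m le_rfl f = f ⊗ₜ[k] (1 : SLring k m 0)) : SLInv f := by
  intro K _ _ M hM
  let θ0 : MvPolynomial (SqIdx m 0 × SqIdx m 0) k →ₐ[k] K :=
    aeval fun p => M (sqE m p.1) (sqE m p.2)
  have hθ0 : θ0 (genDet k m 0) = 1 := by
    rw [genDet, AlgHom.map_det, ← hM, ← Matrix.det_submatrix_equiv_self (sqE m) M]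
    congr 1
    ext1 i j
    simp [θ0]
  let θ : SLring k m 0 →ₐ[k] K := Ideal.Quotient.liftₐ _ θ0 (by
    intro a ha
    have : Ideal.span {genDet k m 0 - 1} ≤ RingHom.ker θ0 := by
      rw [Ideal.span_le, Set.singleton_subset_iff]
      change θ0 _ = 0
      rw [map_sub, hθ0, map_one, sub_self]
    exact this ha)
  have hθ : ∀ i j, θ (gvar k m 0 i j) = M (sqE m i) (sqE m j) := by
    intro i j
    have : θ (gvar k m 0 i j) = θ0 (X (i, j)) := rfl
    rw [this]
    simp [θ0]
  let ψ1 : MatRing k m n →ₐ[k] MvPolynomial (RowI m n × ColI m) K :=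
    mapAlgHom (Algebra.ofId k K)
  let ψ2 : SLring k m 0 →ₐ[k] MvPolynomial (RowI m n × ColI m) K :=
    (IsScalarTower.toAlgHom k K (MvPolynomial (RowI m n × ColI m) K)).comp θ
  let Ψ : MatRing k m n ⊗[k] SLring k m 0 →ₐ[k] MvPolynomial (RowI m n × ColI m) K :=
    Algebra.TensorProduct.lift ψ1 ψ2 (fun _ _ => Commute.all _ _)
  have hΨ : Ψ.comp (coactB k m n m le_rfl) = coM M := by
    apply MvPolynomial.algHom_ext
    rintro ⟨i, j⟩
    rw [AlgHom.comp_apply, coactB_X, map_sum]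
    simp only [coM, aeval_X]
    refine Finset.sum_congr rfl fun l _ => ?_
    simp only [Ψ, Algebra.TensorProduct.lift_tmul]
    congr 1
    · simp [ψ1]
    · simp [ψ2, hθ]
  have h := congrArg Ψ hf
  rw [← AlgHom.comp_apply, hΨ] at h
  rw [h]
  simp only [Ψ, Algebra.TensorProduct.lift_tmul, map_one, mul_one]
  rfl

end Final

/-- over an algebraically closed field of characteristic 0, a compatible
family `x ∈ k[M_∞]` is coinvariant for all the coactions `ρ_{(m,n)}` (dual to right
multiplication by `SL_m`) if and only if each component lies in `k[δ_{m,n}]`; that is,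
`k[M_∞]^{k[SL_{∞,0}]} = k̂[δ_∞]`. -/
theorem stmt18 (k : Type) [Field k] [IsAlgClosed k] [CharZero k] :
    ∀ x : ↥(MatInf k),
      (∀ p : PIdx, coactB k p.1.1 p.1.2 p.1.1 le_rfl (x.1 p) =
        (x.1 p) ⊗ₜ[k] (1 : SLring k p.1.1 0)) ↔
      (∀ p : PIdx, x.1 p ∈ DeltaSub k p.1.1 p.1.2) := by
  intro x
  constructor
  · intro h p
    obtain ⟨⟨m, n⟩, hm, hn⟩ := p
    have hne : Nonempty (ColI m) := ⟨colE m ⟨0, hm⟩⟩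
    exact deltaGen_le k m n (SLInv_mem k _ (coinv_SLInv k m n _ (h ⟨⟨m, n⟩, hm, hn⟩)))
  · intro h p
    have hle : DeltaSub k p.1.1 p.1.2 ≤ AlgHom.equalizer (coactB k p.1.1 p.1.2 p.1.1 le_rfl)
        (Algebra.TensorProduct.includeLeft :
          MatRing k p.1.1 p.1.2 →ₐ[k] MatRing k p.1.1 p.1.2 ⊗[k] SLring k p.1.1 0) := by
      apply Algebra.adjoin_le
      rintro _ ⟨I, hI, hsub, rfl⟩
      exact coactB_dMinor k _ _ I hI hsub
    exact hle (h p)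

end
end
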